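/- arXiv:2502.11162 — 4 statements merged into one kernel-verified Lean document; each statement's English description precedes it below -/
import Mathlib

section
/- Let N, d be natural numbers at least 2, let p ∈ (0, ∞], q ∈ [1, ∞], let k be a natural number with 1 ≤ k ≤ d − 1, and let σ, δ > 0 satisfy σ/δ > b_{p,q,d} · N^{−2/k}, where b_{p,q,d} = 2416 · d^{[1/2 − 1/q]_+ + [1/p − 1/2]_+} (with 1/∞ = 0). Then there exists a (δ, q)-separated dataset D of size N with 2 classes in ℝ^d such that no feedforward ReLU neural network f : ℝ^d → ℝ of width k (of any depth) (σ, p)-robustly memorizes D. -/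
open scoped ENNReal BigOperators

noncomputable section

/-- A multilayer perceptron (feedforward ReLU network) with input dimension `m`
and output dimension `n`, given as a nonempty list of affine layers. -/
inductive MLP : ℕ → ℕ → Type
  | last : {m n : ℕ} → Matrix (Fin n) (Fin m) ℝ → (Fin n → ℝ) → MLP m n
  | cons : {m h n : ℕ} → Matrix (Fin h) (Fin m) ℝ → (Fin h → ℝ) → MLP h n → MLP m n

/-- Evaluation of an MLP: every affine layer except the last is followed by a
coordinatewise ReLU. -/
def MLP.eval : {m n : ℕ} → MLP m n → (Fin m → ℝ) → Fin n → ℝ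
  | _, _, .last W b, x => W.mulVec x + b
  | _, _, .cons W b rest, x => MLP.eval rest fun i => max ((W.mulVec x + b) i) 0

/-- Depth of an MLP: the number of affine layers. -/
def MLP.depth : {m n : ℕ} → MLP m n → ℕ
  | _, _, .last _ _ => 1
  | _, _, .cons _ _ rest => MLP.depth rest + 1

/-- Width of an MLP: the maximum of the hidden-layer dimensions. -/
def MLP.width : {m n : ℕ} → MLP m n → ℕ
  | _, _, .last _ _ => 0
  | _, _, @MLP.cons _ h _ _ _ rest => max h (MLP.width rest)

/-- The `l_p` (quasi-)norm on `ℝ^d`, for `p ∈ (0,∞]`. -/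
def lpNorm (p : ℝ≥0∞) {d : ℕ} (x : Fin d → ℝ) : ℝ :=
  if p = ⊤ then ⨆ i, |x i| else (∑ i, |x i| ^ p.toReal) ^ (1 / p.toReal)

/-- The `l_p` norm on `ℝ^d` with a real exponent `p`. -/
def lpNormR (p : ℝ) {d : ℕ} (x : Fin d → ℝ) : ℝ := (∑ i, |x i| ^ p) ^ (1 / p)

/-- `1/p`, with the convention `1/∞ = 0`. -/
def rinv (p : ℝ≥0∞) : ℝ := if p = ⊤ then 0 else 1 / p.toReal

/-- `c_p^+(d) = d^{[1/2 - 1/p]_+}`. -/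
def cplus (p : ℝ≥0∞) (d : ℕ) : ℝ := (d : ℝ) ^ max ((1 : ℝ) / 2 - rinv p) 0

/-- `c_p^-(d) = d^{[1/2 - 1/p]_-}`. -/
def cminus (p : ℝ≥0∞) (d : ℕ) : ℝ := (d : ℝ) ^ min ((1 : ℝ) / 2 - rinv p) 0

/-- A dataset is `(δ, q)`-separated if the minimal `l_q` distance between
differently labeled points equals `δ`. -/
def Separated {N d : ℕ} (q : ℝ≥0∞) (δ : ℝ) (X : Fin N → Fin d → ℝ) (Y : Fin N → ℕ) : Prop :=
  (∀ i j, Y i ≠ Y j → δ ≤ lpNorm q (X i - X j)) ∧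
    ∃ i j, Y i ≠ Y j ∧ lpNorm q (X i - X j) = δ

/-- `f` `(σ, p)`-robustly memorizes the dataset `(X, Y)`. -/
def RobustMem {N d : ℕ} (p : ℝ≥0∞) (σ : ℝ) (X : Fin N → Fin d → ℝ) (Y : Fin N → ℕ)
    (f : (Fin d → ℝ) → ℝ) : Prop :=
  ∀ i, ∀ x : Fin d → ℝ, lpNorm p (x - X i) ≤ σ → f x = (Y i : ℝ)

/-- A matrix `M` `(σ, k)`-preserves a dataset: Euclidean distances between points of
`σ`-neighborhoods (in `l₂`) of differently labeled data points do not decrease. -/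
def Preserves {N d m : ℕ} (σ : ℝ) (X : Fin N → Fin d → ℝ) (Y : Fin N → ℕ)
    (M : Matrix (Fin m) (Fin d) ℝ) : Prop :=
  ∀ i j, Y i ≠ Y j → ∀ a a' : Fin d → ℝ,
    lpNorm 2 (a - X i) ≤ σ → lpNorm 2 (a' - X j) ≤ σ →
      lpNorm 2 (a - a') ≤ lpNorm 2 (M.mulVec a - M.mulVec a')

/-- The `l₂ → l₂` (spectral) operator norm of a matrix. -/
def matOpNorm {m d : ℕ} (M : Matrix (Fin m) (Fin d) ℝ) : ℝ :=
  sSup {c | ∃ x : Fin d → ℝ, lpNorm 2 x ≤ 1 ∧ c = lpNorm 2 (M.mulVec x)}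

/-- Generalized binomial coefficient `C(s, m) = s(s-1)⋯(s-m+1)/m!`. -/
def gchoose (s : ℝ) (m : ℕ) : ℝ := (∏ i ∈ Finset.range m, (s - (i : ℝ))) / (m.factorial : ℝ)

section covering
open MeasureTheory Module Metric

theorem sep_card_le {E : Type*} [NormedAddCommGroup E] [NormedSpace ℝ E] [FiniteDimensional ℝ E]
    (t : Finset E) (R r : ℝ) (hR : 0 ≤ R) (hr : 0 < r) (ht : ∀ c ∈ t, ‖c‖ ≤ R)
    (hs : ∀ c ∈ t, ∀ e ∈ t, c ≠ e → r ≤ ‖c - e‖) :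
    (t.card : ℝ) ≤ (1 + 2 * R / r) ^ finrank ℝ E := by
  borelize E
  let μ : Measure E := Measure.addHaar
  have hr2 : 0 < r / 2 := by positivity
  have hρ : 0 < R + r / 2 := by positivity
  set A := ⋃ c ∈ t, ball (c : E) (r / 2) with hA
  have D : Set.Pairwise (t : Set E) (Function.onFun Disjoint fun c => ball (c : E) (r / 2)) := by
    rintro c hc d hd hcd
    apply ball_disjoint_ball
    rw [dist_eq_norm]
    have := hs c hc d hd hcd
    linarith
  have A_subset : A ⊆ ball (0 : E) (R + r / 2) := by
    refine Set.iUnion₂_subset fun x hx => ?_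
    apply ball_subset_ball'
    rw [dist_zero_right]
    linarith [ht x hx]
  have I : (t.card : ℝ≥0∞) * ENNReal.ofReal ((r / 2) ^ finrank ℝ E) * μ (ball 0 1) ≤
      ENNReal.ofReal ((R + r / 2) ^ finrank ℝ E) * μ (ball 0 1) :=
    calc
      (t.card : ℝ≥0∞) * ENNReal.ofReal ((r / 2) ^ finrank ℝ E) * μ (ball 0 1) = μ A := by
        rw [hA, measure_biUnion_finset D fun c _ => measurableSet_ball]
        simp only [μ.addHaar_ball_of_pos _ hr2]
        simp only [Finset.sum_const, nsmul_eq_mul, mul_assoc]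
      _ ≤ μ (ball (0 : E) (R + r / 2)) := measure_mono A_subset
      _ = _ := by simp only [μ.addHaar_ball_of_pos _ hρ]
  have J : (t.card : ℝ≥0∞) * ENNReal.ofReal ((r / 2) ^ finrank ℝ E) ≤
      ENNReal.ofReal ((R + r / 2) ^ finrank ℝ E) :=
    (ENNReal.mul_le_mul_iff_left (measure_ball_pos _ _ zero_lt_one).ne' measure_ball_lt_top.ne).1 I
  have K := ENNReal.toReal_le_of_le_ofReal (pow_nonneg hρ.le _) J
  rw [ENNReal.toReal_mul, ENNReal.toReal_natCast, ENNReal.toReal_ofReal (by positivity)] at K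
  have e : (1 + 2 * R / r) = (R + r / 2) / (r / 2) := by field_simp; ring
  rw [e, div_pow, le_div_iff₀ (by positivity)]
  exact K

theorem exists_net {E : Type*} [NormedAddCommGroup E] [NormedSpace ℝ E] [FiniteDimensional ℝ E]
    (s : Set E) (R r : ℝ) (hR : 0 ≤ R) (hr : 0 < r) (ht : ∀ c ∈ s, ‖c‖ ≤ R) :
    ∃ t : Finset E, (∀ c ∈ t, c ∈ s) ∧ (t.card : ℝ) ≤ (1 + 2 * R / r) ^ finrank ℝ E ∧
      ∀ x ∈ s, ∃ c ∈ t, ‖x - c‖ ≤ r := by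
  classical
  let P : ℕ → Prop := fun n => ∃ t : Finset E, (∀ c ∈ t, c ∈ s) ∧
    (∀ c ∈ t, ∀ e ∈ t, c ≠ e → r ≤ ‖c - e‖) ∧ t.card = n
  have hP0 : P 0 := ⟨∅, by simp⟩
  have hb : ∀ n, P n → n ≤ ⌊(1 + 2 * R / r) ^ finrank ℝ E⌋₊ := by
    rintro n ⟨t, h1, h2, rfl⟩
    exact Nat.le_floor (sep_card_le t R r hR hr (fun c hc => ht c (h1 c hc)) h2)
  set B := ⌊(1 + 2 * R / r) ^ finrank ℝ E⌋₊
  obtain ⟨t, h1, h2, h3⟩ : P (Nat.findGreatest P B) := Nat.findGreatest_spec (Nat.zero_le _) hP0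
  refine ⟨t, h1, sep_card_le t R r hR hr (fun c hc => ht c (h1 c hc)) h2, ?_⟩
  intro x hx
  by_contra! hcon
  have hxt : x ∉ t := fun h => by have := hcon x h; simp at this; linarith
  have hP : P (t.card + 1) := by
    refine ⟨insert x t, ?_, ?_, Finset.card_insert_of_notMem hxt⟩
    · intro c hc
      rcases Finset.mem_insert.1 hc with rfl | hc
      exacts [hx, h1 c hc]
    · intro c hc e he hce
      rcases Finset.mem_insert.1 hc with rfl | hc1 <;> rcases Finset.mem_insert.1 he with rfl | he1
      · exact absurd rfl hce
      · exact (hcon e he1).le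
      · rw [norm_sub_rev]; exact (hcon c hc1).le
      · exact h2 c hc1 e he1 hce
  have := Nat.le_findGreatest (hb _ hP) hP
  omega

end covering

section cluster
open Module

theorem exists_cluster {F : Type*} [NormedAddCommGroup F] [InnerProductSpace ℝ F] (k : ℕ)
    [FiniteDimensional ℝ F]
    (hF : finrank ℝ F = k + 1) (s : ℝ) (hs0 : 0 < s) (hs1 : s ≤ 1) (u : F) (hu : ‖u‖ = 1) :
    ∃ A B : Finset F, (∀ a ∈ A, inner ℝ u a = 0 ∧ ‖a‖ ≤ 2) ∧ (∀ b ∈ B, inner ℝ u b = 0 ∧ ‖b‖ ≤ 2) ∧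
      (A.card : ℝ) ≤ (3.83 / s) ^ k ∧ (B.card : ℝ) ≤ (3.83 / s) ^ k ∧
      ∀ v : F, ‖v‖ = 1 → ‖v - u‖ ≤ 1 → ∃ a ∈ A, ∃ b ∈ B, ∃ t : ℝ, ‖u + a + b - t • v‖ ≤ s ^ 2 := by
  classical
  have : Fact (finrank ℝ F = k + 1) := ⟨hF⟩
  have hu0 : u ≠ 0 := by rintro rfl; simp at hu
  have hK : finrank ℝ (ℝ ∙ u)ᗮ = k := Submodule.finrank_orthogonal_span_singleton hu0
  obtain ⟨A, hA1, hA2, hA3⟩ := exists_net (E := (ℝ ∙ u)ᗮ) {x | ‖x‖ ≤ 2} 2 (1.414 * s) (by norm_num)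
    (by positivity) (fun c hc => hc)
  obtain ⟨B, hB1, hB2, hB3⟩ := exists_net (E := (ℝ ∙ u)ᗮ) {x | ‖x‖ ≤ 1.414 * s} (1.414 * s) (s ^ 2)
    (by positivity) (by positivity) (fun c hc => hc)
  rw [hK] at hA2 hB2
  have h1s : 1 ≤ 1 / s := by rw [le_div_iff₀ hs0]; linarith
  have bA : 1 + 2 * 2 / (1.414 * s) ≤ 3.83 / s := by
    have : 2 * 2 / (1.414 * s) = (4 / 1.414) * (1 / s) := by field_simp; norm_num
    have h3 : 3.83 / s = 3.83 * (1 / s) := by field_simp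
    rw [this, h3]
    norm_num at *
    linarith
  have bB : 1 + 2 * (1.414 * s) / (s ^ 2) ≤ 3.83 / s := by
    have : 2 * (1.414 * s) / (s ^ 2) = 2.828 * (1 / s) := by field_simp; norm_num
    have h3 : 3.83 / s = 3.83 * (1 / s) := by field_simp
    rw [this, h3]
    norm_num at *
    linarith
  have orth : ∀ x : (ℝ ∙ u)ᗮ, inner ℝ u (x : F) = 0 := fun x =>
    Submodule.mem_orthogonal_singleton_iff_inner_right.1 x.2
  refine ⟨A.image Subtype.val, B.image Subtype.val, ?_, ?_, ?_, ?_, ?_⟩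
  · intro a ha
    obtain ⟨x, hx, rfl⟩ := Finset.mem_image.1 ha
    exact ⟨orth x, hA1 x hx⟩
  · intro a ha
    obtain ⟨x, hx, rfl⟩ := Finset.mem_image.1 ha
    have : ‖x‖ ≤ 1.414 * s := hB1 x hx
    refine ⟨orth x, ?_⟩
    rw [Submodule.norm_coe]
    linarith
  · have : ((A.image Subtype.val).card : ℝ) ≤ A.card := by exact_mod_cast Finset.card_image_le
    refine this.trans (hA2.trans ?_)
    gcongr
  · have : ((B.image Subtype.val).card : ℝ) ≤ B.card := by exact_mod_cast Finset.card_image_le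
    refine this.trans (hB2.trans ?_)
    gcongr
  · intro v hv hvu
    have hc : 1 / 2 ≤ inner ℝ u v := by
      have h := norm_sub_sq_real v u
      rw [hv, hu, real_inner_comm] at h
      nlinarith [norm_nonneg (v - u)]
    set c := inner ℝ u v with hcdef
    have hc0 : 0 < c := by linarith
    have huu : inner ℝ u u = (1 : ℝ) := by rw [real_inner_self_eq_norm_sq, hu]; norm_num
    have hw : (1 / c) • v - u ∈ (ℝ ∙ u)ᗮ := by
      rw [Submodule.mem_orthogonal_singleton_iff_inner_right, inner_sub_right, inner_smul_right,
        huu, ← hcdef]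
      field_simp
      simp
    set w : (ℝ ∙ u)ᗮ := ⟨(1 / c) • v - u, hw⟩ with hwdef
    have hwn : ‖w‖ ≤ 2 := by
      have h1 : ‖(1 / c) • v - u‖ ^ 2 ≤ 3 := by
        rw [norm_sub_sq_real, norm_smul, hv, hu, inner_smul_left, real_inner_comm, ← hcdef]
        have : 1 / c ≤ 2 := by rw [div_le_iff₀ hc0]; linarith
        have h2 : 0 < 1 / c := by positivity
        have h3 : 1 / c * c = 1 := by field_simp
        simp only [Real.norm_eq_abs, abs_of_pos h2]
        simp only [conj_trivial, h3]
        nlinarith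
      change ‖(1 / c) • v - u‖ ≤ 2
      nlinarith [norm_nonneg ((1 / c) • v - u)]
    obtain ⟨a, ha, haw⟩ := hA3 w hwn
    obtain ⟨b, hb, hbw⟩ := hB3 (w - a) haw
    refine ⟨a, Finset.mem_image_of_mem _ ha, b, Finset.mem_image_of_mem _ hb, 1 / c, ?_⟩
    have : u + (a : F) + b - (1 / c) • v = -((w - a - b : (ℝ ∙ u)ᗮ) : F) := by
      simp only [hwdef, Submodule.coe_sub]
      abel
    rw [this, norm_neg, Submodule.norm_coe]
    exact hbw

theorem exists_dataset {F : Type*} [NormedAddCommGroup F] [InnerProductSpace ℝ F] (k N : ℕ)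
    [FiniteDimensional ℝ F]
    (hF : finrank ℝ F = k + 1) (s : ℝ) (hs0 : 0 < s) (hs1 : s ≤ 1)
    (hN : 2 * 3 ^ (k + 1) * (3.83 / s) ^ k ≤ (N : ℝ)) :
    ∃ (X : Fin N → F) (Y : Fin N → ℕ), (∀ i, 1 ≤ Y i ∧ Y i ≤ 2) ∧
      (∀ i j, Y i ≠ Y j → 1 ≤ ‖X i - X j‖) ∧
      ∀ v : F, ‖v‖ = 1 → ∃ i j, Y i ≠ Y j ∧ ∃ t : ℝ, ‖X i - X j - t • v‖ ≤ s ^ 2 := by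
  classical
  obtain ⟨T, hT1, hT2, hT3⟩ := exists_net (E := F) {x | ‖x‖ = 1} 1 1 (by norm_num)
    (by norm_num) (fun c hc => le_of_eq hc)
  rw [hF] at hT2
  have hcl := fun u : T => exists_cluster k hF s hs0 hs1 u.1 (hT1 u.1 u.2)
  choose A B hA hB hAc hBc hcov using hcl
  have : Nontrivial F := Module.nontrivial_of_finrank_pos (R := ℝ) (by omega)
  obtain ⟨e, he⟩ := exists_norm_eq F (zero_le_one (α := ℝ))
  let idx : T ≃ Fin (Fintype.card T) := Fintype.equivFin T
  let sh : T → F := fun u => (6 * ((idx u : ℕ) : ℝ)) • e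
  let I := Σ u : T, (A u ⊕ B u)
  let X0 : I → F := fun i => match i with
    | ⟨u, .inl a⟩ => sh u + (u.1 + a.1)
    | ⟨u, .inr b⟩ => sh u - b.1
  let Y0 : I → ℕ := fun i => match i with
    | ⟨_, .inl _⟩ => 1
    | ⟨_, .inr _⟩ => 2
  have hsh : ∀ u u' : T, u ≠ u' → 6 ≤ ‖sh u - sh u'‖ := by
    intro u u' h
    have h1 : (idx u : ℕ) ≠ (idx u' : ℕ) := fun h' => h (idx.injective (Fin.ext h'))
    have h2 : (1 : ℝ) ≤ |((idx u : ℕ) : ℝ) - ((idx u' : ℕ) : ℝ)| := by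
      have : (1 : ℤ) ≤ |((idx u : ℕ) : ℤ) - ((idx u' : ℕ) : ℤ)| :=
        Int.one_le_abs (by omega)
      exact_mod_cast this
    simp only [sh]
    rw [← sub_smul, norm_smul, he, ← mul_sub, Real.norm_eq_abs, abs_mul]
    norm_num
    linarith
  have key : ∀ (u u' : T) (a : A u) (b : B u'),
      1 ≤ ‖(sh u + (u.1 + a.1)) - (sh u' - b.1)‖ := by
    intro u u' a b
    have hu1 : ‖u.1‖ = 1 := hT1 u.1 u.2
    by_cases h : u = u'
    · subst h
      have e1 : (sh u + (u.1 + a.1)) - (sh u - b.1) = u.1 + a.1 + b.1 := by abel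
      rw [e1]
      have h1 : inner ℝ u.1 (u.1 + a.1 + b.1) = (1 : ℝ) := by
        rw [inner_add_right, inner_add_right, (hA u a.1 a.2).1, (hB u b.1 b.2).1,
          real_inner_self_eq_norm_sq, hu1]
        norm_num
      have h2 := real_inner_le_norm u.1 (u.1 + a.1 + b.1)
      rw [h1, hu1, one_mul] at h2
      exact h2
    · have h6 := hsh u u' h
      have e1 : sh u - sh u' = ((sh u + (u.1 + a.1)) - (sh u' - b.1)) - (u.1 + a.1 + b.1) := by abel
      rw [e1] at h6
      have h7 := norm_sub_le ((sh u + (u.1 + a.1)) - (sh u' - b.1)) (u.1 + a.1 + b.1)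
      have h8 := norm_add₃_le (a := u.1) (b := a.1) (c := b.1)
      have h9 := (hA u a.1 a.2).2
      have h10 := (hB u' b.1 b.2).2
      linarith
  have cov0 : ∀ v : F, ‖v‖ = 1 → ∃ i j : I, Y0 i ≠ Y0 j ∧ ∃ t : ℝ, ‖X0 i - X0 j - t • v‖ ≤ s ^ 2 := by
    intro v hv
    obtain ⟨u, hu, huv⟩ := hT3 v hv
    obtain ⟨a, ha, b, hb, t, ht⟩ := hcov ⟨u, hu⟩ v hv huv
    refine ⟨⟨⟨u, hu⟩, .inl ⟨a, ha⟩⟩, ⟨⟨u, hu⟩, .inr ⟨b, hb⟩⟩, by simp [Y0], t, ?_⟩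
    have : X0 ⟨⟨u, hu⟩, .inl ⟨a, ha⟩⟩ - X0 ⟨⟨u, hu⟩, .inr ⟨b, hb⟩⟩ - t • v = u + a + b - t • v := by
      simp only [X0]
      abel
    rw [this]
    exact ht
  have hcard : Fintype.card I ≤ N := by
    have h1 : (Fintype.card I : ℝ) ≤ N := by
      refine le_trans ?_ hN
      simp only [I, Fintype.card_sigma, Fintype.card_sum, Fintype.card_coe]
      push_cast
      calc ∑ u : T, (((A u).card : ℝ) + (B u).card)
          ≤ ∑ u : T, ((3.83 / s) ^ k + (3.83 / s) ^ k) :=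
            Finset.sum_le_sum fun u _ => add_le_add (hAc u) (hBc u)
        _ = (T.card : ℝ) * (2 * (3.83 / s) ^ k) := by
            simp
            ring
        _ ≤ 3 ^ (k + 1) * (2 * (3.83 / s) ^ k) := by
            gcongr
            refine hT2.trans (le_of_eq ?_)
            norm_num
        _ = _ := by ring
    exact_mod_cast h1
  obtain ⟨i0, -⟩ := cov0 e he
  have : Nonempty I := ⟨i0⟩
  obtain ⟨f⟩ : Nonempty (I ↪ Fin N) := Function.Embedding.nonempty_of_card_le (by simpa using hcard)
  have hg : Function.Surjective (Function.invFun f) := Function.invFun_surjective f.injective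
  set g := Function.invFun f
  refine ⟨X0 ∘ g, Y0 ∘ g, ?_, ?_, ?_⟩
  · intro i
    simp only [Function.comp]
    rcases g i with ⟨u, a | b⟩ <;> simp [Y0]
  · intro i j
    simp only [Function.comp]
    rcases g i with ⟨u, a | b⟩ <;> rcases g j with ⟨u', a' | b'⟩ <;> simp only [Y0, X0] <;> intro h
    · exact absurd rfl h
    · exact key u u' a b'
    · rw [norm_sub_rev]; exact key u' u a' b
    · exact absurd rfl h
  · intro v hv
    obtain ⟨i, j, h, t, ht⟩ := cov0 v hv
    obtain ⟨i', rfl⟩ := hg i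
    obtain ⟨j', rfl⟩ := hg j
    exact ⟨i', j', h, t, ht⟩

end cluster

section lp

theorem lpNorm_nonneg (p : ℝ≥0∞) {d : ℕ} (x : Fin d → ℝ) : 0 ≤ lpNorm p x := by
  unfold lpNorm
  split_ifs
  · exact Real.iSup_nonneg fun i => abs_nonneg _
  · positivity

theorem abs_le_lpNorm (p : ℝ≥0∞) (hp : 0 < p) {d : ℕ} (x : Fin d → ℝ) (i : Fin d) :
    |x i| ≤ lpNorm p x := by
  unfold lpNorm
  split_ifs with h
  · exact le_ciSup (f := fun i => |x i|) (Set.finite_range _).bddAbove i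
  · have hp0 : 0 < p.toReal := ENNReal.toReal_pos hp.ne' h
    have h1 : |x i| = (|x i| ^ p.toReal) ^ (1 / p.toReal) := by
      rw [← Real.rpow_mul (abs_nonneg _), mul_one_div_cancel hp0.ne', Real.rpow_one]
    rw [h1]
    apply Real.rpow_le_rpow (by positivity) _ (by positivity)
    exact Finset.single_le_sum (f := fun i => |x i| ^ p.toReal) (fun i _ => by positivity)
      (Finset.mem_univ i)

theorem lpNorm_smul (p : ℝ≥0∞) (hp : 0 < p) {d : ℕ} (c : ℝ) (hc : 0 ≤ c) (x : Fin d → ℝ) :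
    lpNorm p (c • x) = c * lpNorm p x := by
  unfold lpNorm
  split_ifs with h
  · rw [Real.mul_iSup_of_nonneg hc]
    simp [abs_mul, abs_of_nonneg hc]
  · have hp0 : 0 < p.toReal := ENNReal.toReal_pos hp.ne' h
    simp only [Pi.smul_apply, smul_eq_mul, abs_mul, abs_of_nonneg hc]
    simp only [Real.mul_rpow hc (abs_nonneg _)]
    rw [← Finset.mul_sum, Real.mul_rpow (by positivity) (by positivity), ← Real.rpow_mul hc,
      mul_one_div_cancel hp0.ne', Real.rpow_one]

theorem lpNorm_neg (p : ℝ≥0∞) {d : ℕ} (x : Fin d → ℝ) :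
    lpNorm p (-x) = lpNorm p x := by
  simp [lpNorm]

theorem lpNorm_two {d : ℕ} (x : Fin d → ℝ) : lpNorm 2 x = ‖WithLp.toLp 2 x‖ := by
  rw [EuclideanSpace.norm_eq]
  simp [lpNorm, Real.sqrt_eq_rpow]

theorem lpNorm_le_of_le {d : ℕ} (a b : ℝ≥0∞) (hb : 0 < b) (hab : b ≤ a) (x : Fin d → ℝ) :
    lpNorm a x ≤ lpNorm b x := by
  by_cases ha : a = ⊤
  · have h0 := lpNorm_nonneg b x
    have : lpNorm a x = ⨆ i, |x i| := by simp [lpNorm, ha]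
    rw [this]
    exact Real.iSup_le (fun i => abs_le_lpNorm b hb x i) h0
  · have hbt : b ≠ ⊤ := fun h => ha (top_le_iff.1 (h ▸ hab))
    have hb0 : 0 < b.toReal := ENNReal.toReal_pos hb.ne' hbt
    have hab' : b.toReal ≤ a.toReal := ENNReal.toReal_mono ha hab
    have ha0 : 0 < a.toReal := hb0.trans_le hab'
    have hM0 := lpNorm_nonneg b x
    have hM := abs_le_lpNorm b hb x
    have hMb : lpNorm b x ^ b.toReal = ∑ i, |x i| ^ b.toReal := by
      simp only [lpNorm, hbt, if_false]
      rw [← Real.rpow_mul (by positivity), one_div_mul_cancel hb0.ne', Real.rpow_one]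
    set M := lpNorm b x
    have : lpNorm a x = (∑ i, |x i| ^ a.toReal) ^ (1 / a.toReal) := by simp [lpNorm, ha]
    rw [this]
    have hs : ∑ i, |x i| ^ a.toReal ≤ M ^ a.toReal := by
      calc ∑ i, |x i| ^ a.toReal ≤ ∑ i, |x i| ^ b.toReal * M ^ (a.toReal - b.toReal) := by
            refine Finset.sum_le_sum fun i _ => ?_
            have : |x i| ^ a.toReal = |x i| ^ b.toReal * |x i| ^ (a.toReal - b.toReal) := by
              rw [← Real.rpow_add_of_nonneg (abs_nonneg _) hb0.le (by linarith)]
              congr 1; ring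
            rw [this]
            gcongr
            exact hM i
        _ = M ^ a.toReal := by
            rw [← Finset.sum_mul, ← hMb, ← Real.rpow_add_of_nonneg hM0 hb0.le (by linarith)]
            congr 1; ring
    calc _ ≤ (M ^ a.toReal) ^ (1 / a.toReal) := by gcongr
      _ = M := by rw [← Real.rpow_mul hM0, mul_one_div_cancel ha0.ne', Real.rpow_one]

theorem rinv_anti (a b : ℝ≥0∞) (hb : 0 < b) (hab : b ≤ a) : rinv a ≤ rinv b := by
  unfold rinv
  by_cases ha : a = ⊤
  · simp only [ha, if_true]
    split_ifs <;> positivity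
  · have hbt : b ≠ ⊤ := fun h => ha (top_le_iff.1 (h ▸ hab))
    have hb0 : 0 < b.toReal := ENNReal.toReal_pos hb.ne' hbt
    have hab' : b.toReal ≤ a.toReal := ENNReal.toReal_mono ha hab
    simp only [ha, hbt, if_false]
    gcongr

theorem lpNorm_compare {d : ℕ} (a b : ℝ≥0∞) (ha : 0 < a) (hb : 0 < b) (x : Fin d → ℝ) :
    lpNorm a x ≤ (d : ℝ) ^ max (rinv a - rinv b) 0 * lpNorm b x := by
  rcases le_total b a with hab | hab
  · rw [max_eq_right (by linarith [rinv_anti a b hb hab]), Real.rpow_zero, one_mul]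
    exact lpNorm_le_of_le a b hb hab x
  · rw [max_eq_left (by linarith [rinv_anti b a ha hab])]
    by_cases hat : a = ⊤
    · have hbt : b = ⊤ := top_le_iff.1 (hat ▸ hab)
      simp [hat, hbt]
    have ha0 : 0 < a.toReal := ENNReal.toReal_pos ha.ne' hat
    have hla : lpNorm a x = (∑ i, |x i| ^ a.toReal) ^ (1 / a.toReal) := by simp [lpNorm, hat]
    have hra : rinv a = 1 / a.toReal := by simp [rinv, hat]
    by_cases hbt : b = ⊤
    · have hM := abs_le_lpNorm b hb x
      have hM0 := lpNorm_nonneg b x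
      have hrb : rinv b = 0 := by simp [rinv, hbt]
      set M := lpNorm b x
      rw [hla, hra, hrb, sub_zero]
      calc _ ≤ (∑ _i : Fin d, M ^ a.toReal) ^ (1 / a.toReal) := by
            gcongr with i
            exact hM i
        _ = ((d : ℝ) * M ^ a.toReal) ^ (1 / a.toReal) := by simp
        _ = _ := by
            rw [Real.mul_rpow (by positivity) (by positivity), ← Real.rpow_mul hM0,
              mul_one_div_cancel ha0.ne', Real.rpow_one]
    · have hb0 : 0 < b.toReal := ENNReal.toReal_pos hb.ne' hbt
      have hlb : lpNorm b x = (∑ i, |x i| ^ b.toReal) ^ (1 / b.toReal) := by simp [lpNorm, hbt]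
      have hrb : rinv b = 1 / b.toReal := by simp [rinv, hbt]
      have hab' : a.toReal ≤ b.toReal := ENNReal.toReal_mono hbt hab
      have h := Real.rpow_sum_le_const_mul_sum_rpow Finset.univ (fun i => |x i| ^ a.toReal)
        (p := b.toReal / a.toReal) (by rw [le_div_iff₀ ha0]; linarith)
      have h2 : ∀ i, |(|x i| ^ a.toReal)| ^ (b.toReal / a.toReal) = |x i| ^ b.toReal := by
        intro i
        rw [abs_of_nonneg (by positivity), ← Real.rpow_mul (abs_nonneg _)]
        congr 1
        field_simp
      simp only [h2] at h
      have h3 : ∀ i, |(|x i| ^ a.toReal)| = |x i| ^ a.toReal := fun i =>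
        abs_of_nonneg (by positivity)
      simp only [h3, Finset.card_univ, Fintype.card_fin] at h
      have h4 := Real.rpow_le_rpow (z := 1 / b.toReal) (by positivity) h (by positivity)
      rw [Real.mul_rpow (by positivity) (by positivity), ← Real.rpow_mul (by positivity),
        ← Real.rpow_mul (by positivity)] at h4
      rw [hla, hlb, hra, hrb]
      have e1 : b.toReal / a.toReal * (1 / b.toReal) = 1 / a.toReal := by field_simp
      have e2 : (b.toReal / a.toReal - 1) * (1 / b.toReal) = 1 / a.toReal - 1 / b.toReal := by
        field_simp
      rwa [e1, e2] at h4

end lp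

section core
open Module

theorem core_dataset (N d k : ℕ) (hN : 2 ≤ N) (hk1 : 1 ≤ k) (hkd : k + 1 ≤ d) :
    ∃ (X : Fin N → Fin d → ℝ) (Y : Fin N → ℕ), (∀ i, 1 ≤ Y i ∧ Y i ≤ 2) ∧
      (∀ i j, Y i ≠ Y j → 1 ≤ lpNorm 2 (X i - X j)) ∧
      ∀ (h : ℕ) (W : Matrix (Fin h) (Fin d) ℝ), h ≤ k → ∃ i j, Y i ≠ Y j ∧
        ∃ v : Fin d → ℝ, W.mulVec v = 0 ∧
          lpNorm 2 (X i - X j - v) ≤ 4832 * (N : ℝ) ^ (-(2 : ℝ) / (k : ℝ)) := by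
  have hN0 : (0 : ℝ) < N := by positivity
  have hk0 : (0 : ℝ) < k := by positivity
  set s : ℝ := 69.5 * (N : ℝ) ^ (-(1 : ℝ) / (k : ℝ)) with hs
  have hs0 : 0 < s := by positivity
  have hs2 : s ^ 2 ≤ 4832 * (N : ℝ) ^ (-(2 : ℝ) / (k : ℝ)) := by
    have : ((N : ℝ) ^ (-(1 : ℝ) / (k : ℝ))) ^ 2 = (N : ℝ) ^ (-(2 : ℝ) / (k : ℝ)) := by
      rw [← Real.rpow_natCast, ← Real.rpow_mul hN0.le]
      congr 1
      push_cast
      ring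
    rw [hs, mul_pow, this]
    gcongr
    norm_num
  rcases le_or_gt 1 s with h1 | h1
  · -- trivial case
    let i0 : Fin N := ⟨0, by omega⟩
    let i1 : Fin N := ⟨1, by omega⟩
    let e : Fin d → ℝ := Pi.single ⟨0, by omega⟩ 1
    have he : lpNorm 2 e = 1 := by
      rw [lpNorm_two]
      exact (EuclideanSpace.norm_single _ _).trans (by simp)
    have hne : i1 ≠ i0 := by simp [i0, i1]
    refine ⟨fun i => if i = i0 then e else 0, fun i => if i = i0 then 1 else 2, ?_, ?_, ?_⟩
    · intro i
      dsimp only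
      split_ifs <;> simp
    · intro i j
      dsimp only
      split_ifs <;> intro h
      · exact absurd rfl h
      · rw [sub_zero, he]
      · rw [zero_sub, lpNorm_neg, he]
      · exact absurd rfl h
    · intro h W _
      refine ⟨i0, i1, by simp [hne], 0, by simp, ?_⟩
      simp only [hne, if_true, if_false, sub_zero, he]
      nlinarith
  · have hcount : 2 * 3 ^ (k + 1) * (3.83 / s) ^ k ≤ (N : ℝ) := by
      have e1 : ((N : ℝ) ^ (-(1 : ℝ) / (k : ℝ))) ^ k = (N : ℝ)⁻¹ := by
        rw [← Real.rpow_natCast, ← Real.rpow_mul hN0.le, div_mul_cancel₀ _ hk0.ne', Real.rpow_neg_one]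
      have e2 : (3.83 / s) ^ k = (3.83 / 69.5) ^ k * N := by
        rw [hs, ← div_div, div_pow, e1, div_inv_eq_mul]
      rw [e2, ← mul_assoc]
      have e3 : (2 * 3 ^ (k + 1) * (3.83 / 69.5) ^ k : ℝ) ≤ 1 := by
        have a1 : (2 * 3 ^ (k + 1) : ℝ) = 6 * 3 ^ k := by ring
        have a2 : (6 : ℝ) ≤ 6 ^ k := by
          calc (6 : ℝ) = 6 ^ 1 := by norm_num
            _ ≤ 6 ^ k := pow_le_pow_right₀ (by norm_num) hk1
        calc (2 * 3 ^ (k + 1) * (3.83 / 69.5) ^ k : ℝ) = 6 * 3 ^ k * (3.83 / 69.5) ^ k := by rw [a1]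
          _ ≤ 6 ^ k * 3 ^ k * (3.83 / 69.5) ^ k := by gcongr
          _ = (6 * 3 * (3.83 / 69.5)) ^ k := by rw [mul_pow, mul_pow]
          _ ≤ 1 := pow_le_one₀ (by norm_num) (by norm_num)
      nlinarith
    obtain ⟨f, hf⟩ := exists_linearIndependent_of_le_finrank (R := ℝ)
      (M := EuclideanSpace ℝ (Fin d)) (n := k + 1) (by simpa using hkd)
    let F : Submodule ℝ (EuclideanSpace ℝ (Fin d)) := Submodule.span ℝ (Set.range f)
    have hF : finrank ℝ F = k + 1 := by
      rw [finrank_span_eq_card hf, Fintype.card_fin]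
    obtain ⟨X, Y, hY, hsep, hcov⟩ := exists_dataset (F := F) k N hF s hs0 h1.le hcount
    refine ⟨fun i => WithLp.ofLp (X i : EuclideanSpace ℝ (Fin d)), Y, hY, ?_, ?_⟩
    · intro i j h
      rw [lpNorm_two]
      exact hsep i j h
    · intro h W hh
      let φ : F →ₗ[ℝ] (Fin h → ℝ) := W.mulVecLin ∘ₗ
        (WithLp.linearEquiv 2 ℝ (Fin d → ℝ)).toLinearMap ∘ₗ F.subtype
      have hker : LinearMap.ker φ ≠ ⊥ := LinearMap.ker_ne_bot_of_finrank_lt (by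
        rw [hF]; simp; omega)
      obtain ⟨v, hv, hv0⟩ := Submodule.exists_mem_ne_zero_of_ne_bot hker
      have hvn : ‖(‖v‖⁻¹ : ℝ) • v‖ = 1 := by
        rw [norm_smul, norm_inv, norm_norm, inv_mul_cancel₀ (norm_ne_zero_iff.2 hv0)]
      obtain ⟨i, j, hij, t, ht⟩ := hcov _ hvn
      refine ⟨i, j, hij, WithLp.ofLp ((t • (‖v‖⁻¹ : ℝ) • v : F) : EuclideanSpace ℝ (Fin d)), ?_, ?_⟩
      · have : φ (t • (‖v‖⁻¹ : ℝ) • v) = 0 := by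
          rw [map_smul, map_smul, LinearMap.mem_ker.1 hv, smul_zero, smul_zero]
        exact this
      · rw [lpNorm_two]
        exact le_trans ht hs2

theorem net_factor {d k : ℕ} (hk1 : 1 ≤ k) (net : MLP d 1) (hw : net.width = k) :
    ∃ (h : ℕ) (W : Matrix (Fin h) (Fin d) ℝ), h ≤ k ∧
      ∀ x y : Fin d → ℝ, W.mulVec x = W.mulVec y → net.eval x = net.eval y := by
  cases net with
  | last W b => simp [MLP.width] at hw; omega
  | @cons _ h _ W b rest =>
    refine ⟨h, W, ?_, ?_⟩
    · simp only [MLP.width] at hw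
      omega
    · intro x y hxy
      simp only [MLP.eval, hxy]

end core

/-- **Lower bound for robust memorization with small width, `l_q` separation**. -/
theorem robust_memorization_lower_bound_q
    (N d k : ℕ) (p q : ℝ≥0∞) (σ δ : ℝ)
    (hN : 2 ≤ N) (hd : 2 ≤ d) (hp : 0 < p) (hq : 1 ≤ q)
    (hk1 : 1 ≤ k) (hkd : k ≤ d - 1) (hσ : 0 < σ) (hδ : 0 < δ)
    (hratio : σ / δ > 2416 *
      (d : ℝ) ^ (max ((1 : ℝ) / 2 - rinv q) 0 + max (rinv p - 1 / 2) 0) *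
      (N : ℝ) ^ (-(2 : ℝ) / (k : ℝ))) :
    ∃ (X : Fin N → Fin d → ℝ) (Y : Fin N → ℕ),
      (∀ i, 1 ≤ Y i ∧ Y i ≤ 2) ∧ Separated q δ X Y ∧
      ∀ net : MLP d 1, net.width = k → ¬ RobustMem p σ X Y (fun x => net.eval x 0) := by
  classical
  have hd0 : (0 : ℝ) < d := by positivity
  obtain ⟨X, Y, hY, hsep, hcov⟩ := core_dataset N d k hN hk1 (by omega)
  have hq0 : 0 < q := lt_of_lt_of_le one_pos hq
  have hr2 : rinv 2 = 1 / 2 := by simp [rinv]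
  set β := max ((1 : ℝ) / 2 - rinv q) 0
  set α := max (rinv p - 1 / 2) 0
  set ν := (N : ℝ) ^ (-(2 : ℝ) / (k : ℝ))
  have hν0 : 0 ≤ ν := by positivity
  -- minimal distance
  let S : Finset (Fin N × Fin N) := Finset.univ.filter fun z => Y z.1 ≠ Y z.2
  have hS : S.Nonempty := by
    obtain ⟨i, j, h, -⟩ := hcov 0 0 (by omega)
    exact ⟨(i, j), by simp [S, h]⟩
  obtain ⟨⟨i0, j0⟩, hmem, hmin⟩ := S.exists_min_image (fun z => lpNorm q (X z.1 - X z.2)) hS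
  have hij0 : Y i0 ≠ Y j0 := by simpa [S] using hmem
  set m := lpNorm q (X i0 - X j0) with hm
  have hmin' : ∀ i j, Y i ≠ Y j → m ≤ lpNorm q (X i - X j) := fun i j h =>
    hmin (i, j) (by simp [S, h])
  have hm1 : 1 ≤ (d : ℝ) ^ β * m := by
    have h1 := lpNorm_compare 2 q (by norm_num) hq0 (X i0 - X j0)
    rw [hr2] at h1
    exact (hsep i0 j0 hij0).trans h1
  have hdβ : 0 < (d : ℝ) ^ β := by positivity
  have hdα : 0 < (d : ℝ) ^ α := by positivity
  have hm0 : 0 < m := by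
    by_contra hc
    push Not at hc
    nlinarith
  set c := δ / m with hc
  have hc0 : 0 < c := by positivity
  have hcβ : c ≤ δ * (d : ℝ) ^ β := by
    rw [hc, div_le_iff₀ hm0]
    nlinarith
  have hscale : ∀ i j, lpNorm q (c • X i - c • X j) = c * lpNorm q (X i - X j) := fun i j => by
    rw [← smul_sub, lpNorm_smul q hq0 c hc0.le]
  have hcm : c * m = δ := by rw [hc]; field_simp
  refine ⟨fun i => c • X i, Y, hY, ⟨?_, i0, j0, hij0, ?_⟩, ?_⟩
  · intro i j h
    dsimp only
    rw [hscale, ← hcm]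
    exact mul_le_mul_of_nonneg_left (hmin' i j h) hc0.le
  · dsimp only
    rw [hscale, ← hm, hcm]
  · intro net hw hmem
    obtain ⟨h, W, hh, hfac⟩ := net_factor hk1 net hw
    obtain ⟨i, j, hij, v, hv, hres⟩ := hcov h W hh
    set z : Fin d → ℝ := X i - X j - v with hz
    have hzp : lpNorm p ((c / 2) • z) ≤ σ := by
      rw [lpNorm_smul p hp _ (by positivity)]
      have h1 := lpNorm_compare p 2 hp (by norm_num) z
      rw [hr2] at h1
      have h2 : lpNorm p z ≤ (d : ℝ) ^ α * (4832 * ν) :=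
        h1.trans (mul_le_mul_of_nonneg_left hres hdα.le)
      have h3 : 2416 * (d : ℝ) ^ (β + α) * ν * δ < σ := by
        rwa [gt_iff_lt, lt_div_iff₀ hδ] at hratio
      rw [Real.rpow_add hd0] at h3
      calc c / 2 * lpNorm p z ≤ (δ * (d : ℝ) ^ β) / 2 * ((d : ℝ) ^ α * (4832 * ν)) := by
            gcongr
            exact lpNorm_nonneg p z
        _ = 2416 * ((d : ℝ) ^ β * (d : ℝ) ^ α) * ν * δ := by ring
        _ ≤ σ := h3.le
    have hi := hmem i (c • X i - (c / 2) • z) (by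
      have : c • X i - (c / 2) • z - c • X i = -((c / 2) • z) := by abel
      dsimp only
      rw [this, lpNorm_neg]
      exact hzp)
    have hj := hmem j (c • X j + (c / 2) • z) (by
      have : c • X j + (c / 2) • z - c • X j = (c / 2) • z := by abel
      dsimp only
      rw [this]
      exact hzp)
    have hWeq : W.mulVec (c • X i - (c / 2) • z) = W.mulVec (c • X j + (c / 2) • z) := by
      have e : c • X i - (c / 2) • z = (c • X j + (c / 2) • z) + c • v := by
        ext l
        simp only [hz, Pi.add_apply, Pi.sub_apply, Pi.smul_apply, smul_eq_mul]
        ring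
      rw [e, Matrix.mulVec_add _ (c • X j + (c / 2) • z), Matrix.mulVec_smul, hv, smul_zero,
        add_zero]
    have heq := hfac _ _ hWeq
    dsimp only at hi hj
    rw [heq, hj] at hi
    exact hij (by exact_mod_cast hi.symm)

end
end

section
/- Let N, d, C be natural numbers at least 2, let 1 ≤ k ≤ d − 1, and let σ, δ > 0 with σ < δ/2. If 2σ/δ ≤ (1/2)·√(k/(d·e))·N^{−2/k}, then every δ-separated dataset D of size N with C classes in ℝ^d is (σ, ε, k)-orthogonally preservable with ε = (1/2)·√(k/(d·e))·N^{−2/k}; that is, there exists an orthogonal projection P of ℝ^d onto a k-dimensional subspace such that ε·‖a − a'‖₂ ≤ ‖P(a − a')‖₂ for every (x,y), (x',y') ∈ D with y ≠ y' and every a ∈ B₂^d(x, σ), a' ∈ B₂^d(x', σ). -/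
open scoped ENNReal BigOperators

noncomputable section

namespace OPS
open MeasureTheory Matrix

abbrev O (d : ℕ) := Matrix.orthogonalGroup (Fin d) ℝ

lemma householder {d : ℕ} (u v : Fin d → ℝ) (h : u ⬝ᵥ u = v ⬝ᵥ v) :
    ∃ R : O d, (R : Matrix (Fin d) (Fin d) ℝ) *ᵥ u = v := by
  by_cases huv : u = v
  · exact ⟨1, by simp [huv]⟩
  set w := u - v with hw
  have hw0 : w ≠ 0 := sub_ne_zero.2 huv
  have hww : w ⬝ᵥ w ≠ 0 := by
    intro h0
    exact hw0 (dotProduct_self_eq_zero.1 h0)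
  set c : ℝ := 2 / (w ⬝ᵥ w) with hc
  have hcw : c * (w ⬝ᵥ w) = 2 := by rw [hc]; field_simp
  have hwu : 2 * (w ⬝ᵥ u) = w ⬝ᵥ w := by
    rw [hw]
    simp only [sub_dotProduct, dotProduct_sub]
    rw [dotProduct_comm u v]; linarith
  have hmem : (1 - c • vecMulVec w w : Matrix (Fin d) (Fin d) ℝ) ∈ Matrix.orthogonalGroup (Fin d) ℝ := by
    rw [mem_orthogonalGroup_iff]
    have ht : (1 - c • vecMulVec w w)ᵀ = 1 - c • vecMulVec w w := by
      simp [transpose_vecMulVec]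
    rw [ht]
    have h2 : vecMulVec w w * vecMulVec w w = (w ⬝ᵥ w) • vecMulVec w w := by
      rw [vecMulVec_mul_vecMulVec]
      ext i j
      simp [vecMulVec_apply]; try ring
    simp only [sub_mul, mul_sub, one_mul, mul_one, smul_mul_assoc, mul_smul_comm, h2, smul_smul]
    rw [hcw, two_smul, smul_sub, smul_add]; abel
  refine ⟨⟨_, hmem⟩, ?_⟩
  simp only [sub_mulVec, one_mulVec, smul_mulVec, vecMulVec_mulVec]
  have h1 : c * (w ⬝ᵥ u) = 1 := by
    rw [← hwu] at hcw
    linarith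
  ext i
  simp only [Pi.sub_apply, Pi.smul_apply, smul_eq_mul, MulOpposite.smul_eq_mul_unop, MulOpposite.unop_op]
  have : c * (w i * w ⬝ᵥ u) = w i := by
    calc _ = (c * (w ⬝ᵥ u)) * w i := by ring
      _ = _ := by rw [h1, one_mul]
  rw [this, hw]; simp

instance (d : ℕ) : SecondCountableTopology (Matrix (Fin d) (Fin d) ℝ) :=
  inferInstanceAs (SecondCountableTopology (Fin d → Fin d → ℝ))

instance (d : ℕ) : SecondCountableTopology (O d) :=
  TopologicalSpace.Subtype.secondCountableTopology
    {x : Matrix (Fin d) (Fin d) ℝ | x ∈ Matrix.orthogonalGroup (Fin d) ℝ}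

instance (d : ℕ) : CompactSpace (O d) := by
  have : IsCompact {x : Matrix (Fin d) (Fin d) ℝ | x ∈ Matrix.orthogonalGroup (Fin d) ℝ} := by
    have hK : IsCompact (Set.pi Set.univ fun _ : Fin d => Set.pi Set.univ fun _ : Fin d => Set.Icc (-1:ℝ) 1) :=
      isCompact_univ_pi fun _ => isCompact_univ_pi fun _ => isCompact_Icc
    refine IsCompact.of_isClosed_subset (X := Matrix (Fin d) (Fin d) ℝ) hK ?_ ?_
    · simp only [mem_orthogonalGroup_iff]
      exact isClosed_eq (by fun_prop) continuous_const
    · intro A hA i _ j _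
      rw [Set.mem_ofPred_eq, mem_orthogonalGroup_iff] at hA
      have h := congrFun (congrFun hA i) i
      rw [mul_apply] at h
      simp only [transpose_apply, one_apply_eq] at h
      have : A i j * A i j ≤ 1 := by
        rw [← h]
        exact Finset.single_le_sum (f := fun j => A i j * A i j) (fun j _ => mul_self_nonneg _) (Finset.mem_univ j)
      exact abs_le.1 (abs_le_one_iff_mul_self_le_one.2 this)
  exact isCompact_iff_compactSpace.1 this

instance (d : ℕ) : MeasurableSpace (O d) := borel _
instance (d : ℕ) : BorelSpace (O d) := ⟨rfl⟩

lemma dot_orth {d : ℕ} (R : O d) (u : Fin d → ℝ) :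
    ((R : Matrix (Fin d) (Fin d) ℝ) *ᵥ u) ⬝ᵥ ((R : Matrix (Fin d) (Fin d) ℝ) *ᵥ u) = u ⬝ᵥ u := by
  rw [dotProduct_mulVec, vecMul_mulVec, ← dotProduct_mulVec, (mem_orthogonalGroup_iff' _ _).1 R.2, one_mulVec]

lemma inv_coe {d : ℕ} (R : O d) : ((R⁻¹ : O d) : Matrix (Fin d) (Fin d) ℝ) = (R : Matrix (Fin d) (Fin d) ℝ)ᵀ := by
  rfl

lemma lintegral_orth {d : ℕ} (R : O d) (F : (Fin d → ℝ) → ℝ≥0∞) (hF : Measurable F) :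
    ∫⁻ v, F ((R : Matrix (Fin d) (Fin d) ℝ) *ᵥ v) = ∫⁻ v, F v := by
  have hdet : (R : Matrix (Fin d) (Fin d) ℝ).det * (R : Matrix (Fin d) (Fin d) ℝ).det = 1 := by
    have := congrArg Matrix.det ((mem_orthogonalGroup_iff _ _).1 R.2)
    simpa using this
  have h0 : (R : Matrix (Fin d) (Fin d) ℝ).det ≠ 0 := by
    intro h; simp [h] at hdet
  have h1 : |(R : Matrix (Fin d) (Fin d) ℝ).det⁻¹| = 1 := by
    rw [abs_inv, inv_eq_one]
    have := abs_mul_abs_self (R : Matrix (Fin d) (Fin d) ℝ).det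
    rw [hdet] at this
    nlinarith [abs_nonneg (R : Matrix (Fin d) (Fin d) ℝ).det]
  have := Real.map_matrix_volume_pi_eq_smul_volume_pi h0
  rw [h1, ENNReal.ofReal_one, one_smul] at this
  conv_rhs => rw [← this]
  rw [lintegral_map hF]
  · simp [toLin'_apply]
  · exact (LinearMap.continuous_of_finiteDimensional _).measurable

set_option maxHeartbeats 1000000 in
lemma exists_good {d : ℕ} (hd : 0 < d) (S : Set (Fin d → ℝ)) (hS : IsOpen S)
    (hhom : ∀ c : ℝ, c ≠ 0 → ∀ v, c • v ∈ S ↔ v ∈ S)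
    (g : ℝ → ℝ≥0∞) (hg : Measurable g) (ρ : ℝ≥0∞)
    (hW0 : ∫⁻ v : Fin d → ℝ, g (v ⬝ᵥ v) ≠ 0) (hWt : ∫⁻ v : Fin d → ℝ, g (v ⬝ᵥ v) ≠ ∞)
    (hρ : ∫⁻ v : Fin d → ℝ, S.indicator 1 v * g (v ⬝ᵥ v) ≤ ρ * ∫⁻ v : Fin d → ℝ, g (v ⬝ᵥ v))
    {ι : Type} (s : Finset ι) (u : ι → Fin d → ℝ) (hu : ∀ m ∈ s, u m ≠ 0)
    (hcard : (s.card : ℝ≥0∞) * ρ < 1) :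
    ∃ Q : O d, ∀ m ∈ s, (Q : Matrix (Fin d) (Fin d) ℝ)ᵀ *ᵥ u m ∉ S := by
  by_contra hcon
  push Not at hcon
  set f : (Fin d → ℝ) → ℝ≥0∞ := S.indicator 1 with hf
  have hfm : Measurable f := measurable_one.indicator hS.measurableSet
  let μ : Measure (O d) := Measure.haar
  have hμ0 : μ Set.univ ≠ 0 := by
    have : μ ≠ 0 := NeZero.ne _
    simpa using this
  have hμt : μ Set.univ ≠ ∞ := measure_ne_top _ _
  let Φ : (Fin d → ℝ) → ℝ≥0∞ := fun v => ∫⁻ Q : O d, f ((Q : Matrix (Fin d) (Fin d) ℝ)ᵀ *ᵥ v) ∂μ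
  have hwm : Measurable fun v : Fin d → ℝ => g (v ⬝ᵥ v) := by
    refine hg.comp (Continuous.measurable ?_)
    fun_prop
  have hcont : Continuous fun p : O d × (Fin d → ℝ) => (p.1 : Matrix (Fin d) (Fin d) ℝ)ᵀ *ᵥ p.2 := by
    fun_prop
  have hjm : Measurable fun p : O d × (Fin d → ℝ) => f ((p.1 : Matrix (Fin d) (Fin d) ℝ)ᵀ *ᵥ p.2) :=
    hfm.comp hcont.measurable
  have hrot : ∀ (R : O d) (v : Fin d → ℝ), Φ ((R : Matrix (Fin d) (Fin d) ℝ) *ᵥ v) = Φ v := by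
    intro R v
    change ∫⁻ Q : O d, f ((Q : Matrix (Fin d) (Fin d) ℝ)ᵀ *ᵥ _) ∂μ = _
    rw [← lintegral_mul_left_eq_self _ R]
    refine lintegral_congr fun Q => ?_
    congr 1
    rw [mulVec_mulVec]
    congr 1
    change ((R : Matrix (Fin d) (Fin d) ℝ) * (Q : Matrix (Fin d) (Fin d) ℝ))ᵀ * _ = _
    rw [transpose_mul, mul_assoc, (mem_orthogonalGroup_iff' _ _).1 R.2, mul_one]
  have hscale : ∀ (c : ℝ), c ≠ 0 → ∀ v, Φ (c • v) = Φ v := by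
    intro c hc v
    refine lintegral_congr fun Q => ?_
    rw [mulVec_smul]
    by_cases hm : (Q : Matrix (Fin d) (Fin d) ℝ)ᵀ *ᵥ v ∈ S
    · rw [hf, Set.indicator_of_mem hm, Set.indicator_of_mem ((hhom c hc _).2 hm)]; rfl
    · rw [hf, Set.indicator_of_notMem hm, Set.indicator_of_notMem (fun h => hm ((hhom c hc _).1 h))]
  have hconst : ∀ v w : Fin d → ℝ, v ≠ 0 → w ≠ 0 → Φ v = Φ w := by
    intro v w hv hw
    have hv' : 0 < v ⬝ᵥ v := by
      refine lt_of_le_of_ne ?_ fun h => hv (dotProduct_self_eq_zero.1 h.symm)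
      exact Finset.sum_nonneg fun i _ => mul_self_nonneg _
    have hw' : 0 < w ⬝ᵥ w := by
      refine lt_of_le_of_ne ?_ fun h => hw (dotProduct_self_eq_zero.1 h.symm)
      exact Finset.sum_nonneg fun i _ => mul_self_nonneg _
    set c := Real.sqrt (w ⬝ᵥ w / v ⬝ᵥ v)
    have hc : 0 < c := Real.sqrt_pos.2 (by positivity)
    have hcc : c * c = w ⬝ᵥ w / v ⬝ᵥ v := Real.mul_self_sqrt (by positivity)
    obtain ⟨R, hR⟩ := householder (c • v) w (by
      simp only [smul_dotProduct, dotProduct_smul, smul_eq_mul]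
      rw [← mul_assoc, hcc]; field_simp)
    rw [← hR, hrot, hscale c hc.ne']
  -- a reference value
  let e : Fin d → ℝ := fun _ => 1
  have he : e ≠ 0 := fun h => by simpa [e] using congrFun h ⟨0, hd⟩
  have hne : ∀ᵐ v : Fin d → ℝ, v ≠ 0 := by
    have : Nonempty (Fin d) := ⟨⟨0, hd⟩⟩
    exact Measure.ae_ne volume 0
  have key : Φ e * ∫⁻ v : Fin d → ℝ, g (v ⬝ᵥ v) = μ Set.univ * ∫⁻ v : Fin d → ℝ, f v * g (v ⬝ᵥ v) := by
    calc Φ e * ∫⁻ v : Fin d → ℝ, g (v ⬝ᵥ v) = ∫⁻ v : Fin d → ℝ, Φ e * g (v ⬝ᵥ v) := by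
          rw [lintegral_const_mul _ hwm]
      _ = ∫⁻ v : Fin d → ℝ, Φ v * g (v ⬝ᵥ v) := by
          refine lintegral_congr_ae ?_
          filter_upwards [hne] with v hv
          rw [hconst e v he hv]
      _ = ∫⁻ v : Fin d → ℝ, ∫⁻ Q : O d, f ((Q : Matrix (Fin d) (Fin d) ℝ)ᵀ *ᵥ v) * g (v ⬝ᵥ v) ∂μ := by
          refine lintegral_congr fun v => ?_
          rw [lintegral_mul_const]
          exact hjm.comp (measurable_id.prodMk measurable_const)
      _ = ∫⁻ Q : O d, (∫⁻ v : Fin d → ℝ, f ((Q : Matrix (Fin d) (Fin d) ℝ)ᵀ *ᵥ v) * g (v ⬝ᵥ v)) ∂μ := by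
          rw [lintegral_lintegral_swap]
          refine Measurable.aemeasurable ?_
          exact (hjm.comp measurable_swap).mul (hwm.comp measurable_fst)
      _ = ∫⁻ Q : O d, (∫⁻ v : Fin d → ℝ, f v * g (v ⬝ᵥ v)) ∂μ := by
          refine lintegral_congr fun Q => ?_
          rw [← lintegral_orth Q⁻¹ (fun v => f v * g (v ⬝ᵥ v)) (hfm.mul hwm)]
          refine lintegral_congr fun v => ?_
          rw [dot_orth, inv_coe]
      _ = _ := by rw [lintegral_const, mul_comm]
  have h1 : Φ e ≤ μ Set.univ * ρ := by
    have : Φ e * ∫⁻ v : Fin d → ℝ, g (v ⬝ᵥ v) ≤ (μ Set.univ * ρ) * ∫⁻ v : Fin d → ℝ, g (v ⬝ᵥ v) := by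
      rw [key, mul_assoc]; gcongr
    exact (ENNReal.mul_le_mul_iff_left hW0 hWt).1 this
  have h2 : μ Set.univ ≤ s.card * Φ e := by
    calc μ Set.univ = ∫⁻ Q : O d, 1 ∂μ := by simp
      _ ≤ ∫⁻ Q : O d, ∑ m ∈ s, f ((Q : Matrix (Fin d) (Fin d) ℝ)ᵀ *ᵥ u m) ∂μ := by
          refine lintegral_mono fun Q => ?_
          obtain ⟨m, hm, hmS⟩ := hcon Q
          have : f ((Q : Matrix (Fin d) (Fin d) ℝ)ᵀ *ᵥ u m) = 1 := by simp [hf, hmS]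
          calc (1 : ℝ≥0∞) = f ((Q : Matrix (Fin d) (Fin d) ℝ)ᵀ *ᵥ u m) := this.symm
            _ ≤ _ := Finset.single_le_sum (f := fun m => f ((Q : Matrix (Fin d) (Fin d) ℝ)ᵀ *ᵥ u m)) (fun _ _ => zero_le) hm
      _ = ∑ m ∈ s, Φ (u m) := by
          rw [lintegral_finsetSum]
          intro m _
          exact hjm.comp (measurable_id.prodMk measurable_const)
      _ = ∑ m ∈ s, Φ e := Finset.sum_congr rfl fun m hm => hconst _ _ (hu m hm) he
      _ = _ := by simp
  have h3 : μ Set.univ * 1 ≤ μ Set.univ * (s.card * ρ) := by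
    calc μ Set.univ * 1 ≤ s.card * Φ e := by rwa [mul_one]
      _ ≤ s.card * (μ Set.univ * ρ) := by gcongr
      _ = _ := by ring
  exact absurd ((ENNReal.mul_le_mul_iff_right hμ0 hμt).1 h3) (not_le.2 hcard)

end OPS

namespace OPS
open MeasureTheory Matrix

lemma plane_aux {ε S b p q W U : ℝ} (hε : 0 < ε) (hε2 : ε ≤ 1 / 2) (hU : 0 ≤ U) (hS0 : 0 ≤ S) (hb : 0 ≤ b)
    (hp : 0 ≤ p) (hq : 0 ≤ q) (hSU : S ^ 2 + b ^ 2 = U ^ 2) (hS : 2 * ε * U ≤ S)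
    (hW0 : 0 ≤ W) (hW : (S - p) ^ 2 + (b - q) ^ 2 ≤ W ^ 2) (hWU : W ≤ ε * U) :
    ε ^ 2 * (p ^ 2 + q ^ 2) ≤ p ^ 2 := by
  by_contra hlt
  push Not at hlt
  set c := Real.sqrt (1 - ε ^ 2)
  have hc2 : c ^ 2 = 1 - ε ^ 2 := Real.sq_sqrt (by nlinarith)
  have hc0 : 0 < c := Real.sqrt_pos.2 (by nlinarith)
  set r := Real.sqrt (1 - 4 * ε ^ 2)
  have hr2 : r ^ 2 = 1 - 4 * ε ^ 2 := Real.sq_sqrt (by nlinarith)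
  have hr0 : 0 ≤ r := Real.sqrt_nonneg _
  have hr1 : r ≤ 1 := by nlinarith
  have hcr : 1 + r ≤ 2 * c := by
    refine abs_le_of_sq_le_sq' (by nlinarith) (by linarith) |>.2
  have hbr : b ≤ r * U := by
    refine abs_le_of_sq_le_sq' ?_ (by positivity) |>.2
    have : (2 * ε * U) ^ 2 ≤ S ^ 2 := by gcongr
    nlinarith
  have hcp : c * p < ε * q := by
    refine lt_of_pow_lt_pow_left₀ 2 (by positivity) ?_
    nlinarith
  have hcs : c * (S - p) - ε * (b - q) ≤ W := by
    refine abs_le_of_sq_le_sq' ?_ hW0 |>.2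
    nlinarith [sq_nonneg (ε * (S - p) + c * (b - q))]
  have h1 : c * (2 * ε * U) ≤ c * S := by gcongr
  have h2 : ε * b ≤ ε * (r * U) := by gcongr
  have h3 : (ε * U) * (1 + r) ≤ (ε * U) * (2 * c) := by gcongr
  nlinarith

lemma gauss {d : ℕ} (b : Fin d → ℝ) (hb : ∀ i, 0 < b i) :
    ∫⁻ v : Fin d → ℝ, ENNReal.ofReal (Real.exp (-∑ i, b i * v i ^ 2)) =
      ENNReal.ofReal (∏ i, Real.sqrt (Real.pi / b i)) := by
  have he : ∀ v : Fin d → ℝ, Real.exp (-∑ i, b i * v i ^ 2) = ∏ i, Real.exp (-b i * v i ^ 2) := by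
    intro v
    rw [← Real.exp_sum, ← Finset.sum_neg_distrib]
    simp
  simp_rw [he]
  rw [← ofReal_integral_eq_lintegral_ofReal]
  · rw [integral_fintype_prod_volume_eq_prod (f := fun i (x : ℝ) => Real.exp (-b i * x ^ 2))]
    simp_rw [integral_gaussian]
  · exact Integrable.fintype_prod (f := fun i (x : ℝ) => Real.exp (-b i * x ^ 2))
      (fun i => integrable_exp_neg_mul_sq (hb i))
  · exact Filter.Eventually.of_forall fun v => Finset.prod_nonneg fun i _ => (Real.exp_pos _).le

lemma prod_split {d k : ℕ} (hk : k ≤ d) (x y : ℝ) :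
    ∏ i : Fin d, (if i.val < k then x else y) = x ^ k * y ^ (d - k) := by
  rw [Fin.prod_univ_eq_prod_range (fun i => if i < k then x else y) d]
  obtain ⟨m, rfl⟩ := Nat.exists_eq_add_of_le hk
  rw [Finset.prod_range_add]
  congr 1
  · rw [Finset.prod_congr rfl (g := fun _ => x)]
    · simp
    · intro i hi; simp [Finset.mem_range.1 hi]
  · simp

/-- the tail estimate -/
lemma tail {d k : ℕ} (hk : 1 ≤ k) (hkd : k < d) (t : ℝ) (ht : 0 < t) (ht1 : t ≤ 1) :
    ∫⁻ v : Fin d → ℝ, ({v : Fin d → ℝ | ∑ i, (if i.val < k then v i ^ 2 else 0) < (k * t / d) * (v ⬝ᵥ v)}.indicator 1 v)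
        * ENNReal.ofReal (Real.exp (- (v ⬝ᵥ v))) ≤
      ENNReal.ofReal (Real.sqrt ((t * Real.exp 1) ^ k)) *
        ∫⁻ v : Fin d → ℝ, ENNReal.ofReal (Real.exp (- (v ⬝ᵥ v))) := by
  have hkR : (0:ℝ) < k := by exact_mod_cast hk
  have hdR : (0:ℝ) < d := by exact_mod_cast (by omega : 0 < d)
  have hdk : (0:ℝ) < (d:ℝ) - k := by
    have : (k:ℝ) < d := by exact_mod_cast hkd
    linarith
  set B : ℝ := ((d:ℝ) - k) / d with hB
  have hB0 : 0 < B := by positivity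
  let b : Fin d → ℝ := fun i => if i.val < k then 1 / t else B
  have hb : ∀ i, 0 < b i := by intro i; simp only [b]; split_ifs <;> positivity
  have hone : ∀ v : Fin d → ℝ, v ⬝ᵥ v = ∑ i, (1:ℝ) * v i ^ 2 := by
    intro v; simp [dotProduct, sq]
  have hR : ∫⁻ v : Fin d → ℝ, ENNReal.ofReal (Real.exp (- (v ⬝ᵥ v))) =
      ENNReal.ofReal (Real.sqrt Real.pi ^ d) := by
    simp_rw [hone]
    rw [gauss _ (fun _ => one_pos)]
    simp
  rw [hR]
  calc _ ≤ ∫⁻ v : Fin d → ℝ, ENNReal.ofReal (Real.exp (-∑ i, b i * v i ^ 2)) := by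
        refine lintegral_mono fun v => ?_
        by_cases hv : v ∈ {v : Fin d → ℝ | ∑ i, (if i.val < k then v i ^ 2 else 0) < (k * t / d) * (v ⬝ᵥ v)}
        · simp only [Set.indicator_of_mem hv, Pi.one_apply, one_mul]
          refine ENNReal.ofReal_le_ofReal (Real.exp_le_exp.2 (neg_le_neg ?_))
          rw [Set.mem_ofPred_eq] at hv
          set q := ∑ i : Fin d, (if i.val < k then v i ^ 2 else 0) with hq
          have hs : ∑ i, b i * v i ^ 2 = (1 / t - B) * q + B * (v ⬝ᵥ v) := by
            rw [hq, hone, Finset.mul_sum, Finset.mul_sum, ← Finset.sum_add_distrib]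
            refine Finset.sum_congr rfl fun i _ => ?_
            simp only [b]; split_ifs <;> ring
          have hvv : 0 ≤ v ⬝ᵥ v := by rw [hone]; positivity
          have hB1 : B ≤ 1 := by rw [hB, div_le_one hdR]; linarith
          have ht' : 1 ≤ 1 / t := by rw [le_div_iff₀ ht]; linarith
          rw [hs]
          have h1 : (1 / t - B) * q ≤ (1 / t - B) * ((k * t / d) * (v ⬝ᵥ v)) :=
            mul_le_mul_of_nonneg_left hv.le (by linarith)
          have h2 : (1 / t - B) * (k * t / d) + B ≤ 1 := by
            have e1 : 1 / t * (k * t / d) = k / d := by field_simp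
            have e2 : (k:ℝ) / d + B = 1 := by rw [hB]; field_simp; ring
            have : 0 ≤ B * (k * t / d) := by positivity
            nlinarith
          nlinarith [mul_le_mul_of_nonneg_right h2 hvv]
        · simp only [Set.indicator_of_notMem hv, zero_mul]
          exact zero_le
    _ = _ := gauss b hb
    _ ≤ _ := by
        rw [← ENNReal.ofReal_mul (Real.sqrt_nonneg _)]
        refine ENNReal.ofReal_le_ofReal ?_
        have h1 : ∀ i : Fin d, Real.sqrt (Real.pi / b i) = Real.sqrt Real.pi * (if i.val < k then Real.sqrt t else Real.sqrt (1 / B)) := by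
          intro i
          rw [div_eq_mul_one_div, Real.sqrt_mul Real.pi_pos.le]
          simp only [b]; split_ifs <;> simp
        simp_rw [h1]
        rw [Finset.prod_mul_distrib, prod_split hkd.le, Finset.prod_const, Finset.card_univ, Fintype.card_fin, mul_comm]
        gcongr
        refine Real.le_sqrt_of_sq_le ?_
        have : (Real.sqrt t ^ k * Real.sqrt (1 / B) ^ (d - k)) ^ 2 = t ^ k * (1 / B) ^ (d - k) := by
          calc _ = (Real.sqrt t ^ 2) ^ k * (Real.sqrt (1 / B) ^ 2) ^ (d - k) := by ring
            _ = _ := by rw [Real.sq_sqrt ht.le, Real.sq_sqrt (by positivity)]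
        rw [this, mul_pow]
        gcongr
        have hBe : 1 / B ≤ Real.exp (k / (d - k)) := by
          refine le_trans (le_of_eq ?_) (Real.add_one_le_exp _)
          rw [hB]; field_simp; ring
        calc (1 / B) ^ (d - k) ≤ (Real.exp (k / (d - k))) ^ (d - k) := by gcongr
          _ = Real.exp 1 ^ k := by
            rw [← Real.exp_nat_mul, ← Real.exp_nat_mul, Nat.cast_sub hkd.le]
            congr 1; field_simp
end OPS

namespace OPS
open Matrix

lemma lp2 {d : ℕ} (x : Fin d → ℝ) : lpNorm 2 x = ‖WithLp.toLp 2 x‖ := by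
  rw [lpNorm, if_neg (by simp), EuclideanSpace.norm_eq, Real.sqrt_eq_rpow]
  simp

lemma lp2_sq {d : ℕ} (x : Fin d → ℝ) : lpNorm 2 x ^ 2 = x ⬝ᵥ x := by
  rw [lp2, EuclideanSpace.norm_sq_eq]
  simp [dotProduct, sq]

lemma lp2_nonneg {d : ℕ} (x : Fin d → ℝ) : 0 ≤ lpNorm 2 x := by
  rw [lp2]; exact norm_nonneg _

lemma lp2_rev {d : ℕ} (x y : Fin d → ℝ) : (lpNorm 2 x - lpNorm 2 y) ^ 2 ≤ lpNorm 2 (y - x) ^ 2 := by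
  rw [lp2, lp2, lp2, sq_le_sq, WithLp.toLp_sub, abs_of_nonneg (norm_nonneg _), norm_sub_rev]
  exact abs_norm_sub_norm_le _ _

lemma pyth {d : ℕ} (P : Matrix (Fin d) (Fin d) ℝ) (h1 : P * P = P) (h2 : Pᵀ = P) (x : Fin d → ℝ) :
    lpNorm 2 (P *ᵥ x) ^ 2 + lpNorm 2 ((1 - P) *ᵥ x) ^ 2 = lpNorm 2 x ^ 2 := by
  simp only [lp2_sq, sub_mulVec, one_mulVec, sub_dotProduct, dotProduct_sub]
  have e : (P *ᵥ x) ⬝ᵥ (P *ᵥ x) = x ⬝ᵥ (P *ᵥ x) := by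
    rw [dotProduct_mulVec, vecMul_mulVec, h2, h1, ← dotProduct_mulVec]
  rw [dotProduct_comm (P *ᵥ x) x, e]; ring

lemma geom {d : ℕ} (P : Matrix (Fin d) (Fin d) ℝ) (h1 : P * P = P) (h2 : Pᵀ = P) (u v : Fin d → ℝ)
    (ε : ℝ) (hε : 0 < ε) (hε2 : ε ≤ 1 / 2) (hu : 2 * ε * lpNorm 2 u ≤ lpNorm 2 (P *ᵥ u))
    (hw : lpNorm 2 (v - u) ≤ ε * lpNorm 2 u) : ε * lpNorm 2 v ≤ lpNorm 2 (P *ᵥ v) := by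
  have := plane_aux (p := lpNorm 2 (P *ᵥ v)) (q := lpNorm 2 ((1 - P) *ᵥ v)) hε hε2 (lp2_nonneg u)
    (lp2_nonneg (P *ᵥ u)) (lp2_nonneg ((1 - P) *ᵥ u)) (lp2_nonneg _) (lp2_nonneg _) (pyth P h1 h2 u) hu
    (lp2_nonneg (v - u)) (by
      rw [← pyth P h1 h2 (v - u), mulVec_sub, mulVec_sub]
      exact add_le_add (lp2_rev _ _) (lp2_rev _ _)) hw
  rw [pyth P h1 h2, ← mul_pow] at this
  exact abs_le_of_sq_le_sq' this (lp2_nonneg _) |>.2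

lemma exists_proj {N d k : ℕ} (hN : 2 ≤ N) (hk : 1 ≤ k) (hkd : k < d) (t : ℝ) (ht : 0 < t) (ht1 : t ≤ 1)
    (htN : (t * Real.exp 1) ^ k * ((N : ℝ) ^ 2) ^ 2 ≤ 1) (u : Fin N × Fin N → Fin d → ℝ) :
    ∃ P : Matrix (Fin d) (Fin d) ℝ, P * P = P ∧ P.transpose = P ∧ P.rank = k ∧
      ∀ m : Fin N × Fin N, m.1 ≠ m.2 → u m ≠ 0 → (k * t / d) * lpNorm 2 (u m) ^ 2 ≤ lpNorm 2 (P *ᵥ u m) ^ 2 := by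
  classical
  let D : Matrix (Fin d) (Fin d) ℝ := diagonal fun i => if i.val < k then 1 else 0
  have hDD : D * D = D := by simp [D, diagonal_mul_diagonal]
  have hDt : Dᵀ = D := diagonal_transpose _
  have hDr : D.rank = k := by
    rw [Matrix.rank_diagonal]
    simp only [ne_eq, ite_eq_right_iff, one_ne_zero, imp_false, not_not]
    rw [Fintype.card_subtype]
    rw [Fin.card_filter_val_lt]; omega
  have hDv : ∀ v : Fin d → ℝ, (D *ᵥ v) ⬝ᵥ (D *ᵥ v) = ∑ i, (if i.val < k then v i ^ 2 else 0) := by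
    intro v
    simp only [D, dotProduct, mulVec_diagonal]
    refine Finset.sum_congr rfl fun i _ => ?_
    split_ifs <;> simp [sq]
  let S : Set (Fin d → ℝ) := {v : Fin d → ℝ | ∑ i, (if i.val < k then v i ^ 2 else 0) < (k * t / d) * (v ⬝ᵥ v)}
  have hS : IsOpen S := by
    refine isOpen_lt ?_ (by fun_prop)
    refine continuous_finsetSum _ fun i _ => ?_
    split_ifs <;> fun_prop
  have hhom : ∀ c : ℝ, c ≠ 0 → ∀ v, c • v ∈ S ↔ v ∈ S := by
    intro c hc v
    change (∑ i : Fin d, (if i.val < k then (c • v) i ^ 2 else 0) < (k * t / d) * ((c • v) ⬝ᵥ (c • v))) ↔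
      (∑ i : Fin d, (if i.val < k then v i ^ 2 else 0) < (k * t / d) * (v ⬝ᵥ v))
    rw [← hDv, ← hDv, mulVec_smul]
    simp only [smul_dotProduct, dotProduct_smul, smul_eq_mul]
    have hc2 : 0 < c * c := mul_self_pos.2 hc
    rw [← mul_lt_mul_iff_right₀ hc2 (b := (D *ᵥ v) ⬝ᵥ (D *ᵥ v))]
    ring_nf
  let g : ℝ → ℝ≥0∞ := fun r => ENNReal.ofReal (Real.exp (-r))
  have hg : Measurable g := by fun_prop
  have hW : ∫⁻ v : Fin d → ℝ, g (v ⬝ᵥ v) = ENNReal.ofReal (∏ _i : Fin d, Real.sqrt (Real.pi / 1)) := by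
    rw [← gauss (fun _ : Fin d => 1) (fun _ => one_pos)]
    simp [g, dotProduct, sq]
  obtain ⟨Q, hQ⟩ := exists_good (by omega) S hS hhom g hg (ENNReal.ofReal (Real.sqrt ((t * Real.exp 1) ^ k)))
    (by
      rw [hW]
      have : (0:ℝ) < ∏ _i : Fin d, Real.sqrt (Real.pi / 1) :=
        Finset.prod_pos fun _ _ => Real.sqrt_pos.2 (by positivity)
      exact (ENNReal.ofReal_pos.2 this).ne') (by rw [hW]; exact ENNReal.ofReal_ne_top)
    (tail hk hkd t ht ht1)
    (Finset.univ.filter fun m : Fin N × Fin N => m.1 ≠ m.2 ∧ u m ≠ 0) u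
    (fun m hm => (Finset.mem_filter.1 hm).2.2) (by
      set s := (Finset.univ.filter fun m : Fin N × Fin N => m.1 ≠ m.2 ∧ u m ≠ 0) with hs
      have hcard : s.card < N ^ 2 := by
        calc s.card < (Finset.univ : Finset (Fin N × Fin N)).card := by
              refine Finset.card_lt_card (Finset.ssubset_univ_iff.2 fun h => ?_)
              have : ((⟨0, by omega⟩, ⟨0, by omega⟩) : Fin N × Fin N) ∈ s := by rw [h]; simp
              rw [hs, Finset.mem_filter] at this
              exact this.2.1 rfl
          _ = N ^ 2 := by simp [sq]
      rw [← ENNReal.ofReal_natCast, ← ENNReal.ofReal_mul (by positivity), ← ENNReal.ofReal_one,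
        ENNReal.ofReal_lt_ofReal_iff one_pos]
      have hpos : 0 < Real.sqrt ((t * Real.exp 1) ^ k) := Real.sqrt_pos.2 (by positivity)
      have h1 : (N : ℝ) ^ 2 * Real.sqrt ((t * Real.exp 1) ^ k) ≤ 1 := by
        refine abs_le_of_sq_le_sq' (b := 1) ?_ (by norm_num) |>.2
        rw [mul_pow, Real.sq_sqrt (by positivity)]
        linarith
      have h2 : (s.card : ℝ) < (N : ℝ) ^ 2 := by exact_mod_cast hcard
      exact lt_of_lt_of_le (mul_lt_mul_of_pos_right h2 hpos) h1)
  set A : Matrix (Fin d) (Fin d) ℝ := (Q : Matrix (Fin d) (Fin d) ℝ) with hA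
  have hA1 : A * Aᵀ = 1 := (mem_orthogonalGroup_iff _ _).1 Q.2
  have hA2 : Aᵀ * A = 1 := (mem_orthogonalGroup_iff' _ _).1 Q.2
  have hdet : IsUnit A.det := by
    rw [← isUnit_iff_isUnit_det]
    exact ⟨⟨A, Aᵀ, hA1, hA2⟩, rfl⟩
  have hdet' : IsUnit Aᵀ.det := by rwa [det_transpose]
  have hdotA : ∀ x : Fin d → ℝ, (A *ᵥ x) ⬝ᵥ (A *ᵥ x) = x ⬝ᵥ x := fun x => dot_orth Q x
  have hdotAt : ∀ x : Fin d → ℝ, (Aᵀ *ᵥ x) ⬝ᵥ (Aᵀ *ᵥ x) = x ⬝ᵥ x := fun x => dot_orth Q⁻¹ x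
  refine ⟨A * D * Aᵀ, ?_, ?_, ?_, ?_⟩
  · calc A * D * Aᵀ * (A * D * Aᵀ) = A * D * (Aᵀ * A) * D * Aᵀ := by simp only [mul_assoc]
      _ = A * (D * D) * Aᵀ := by rw [hA2, mul_one]; simp only [mul_assoc]
      _ = _ := by rw [hDD]
  · simp only [transpose_mul, transpose_transpose, hDt, mul_assoc]
  · rw [rank_mul_eq_left_of_isUnit_det _ _ hdet', rank_mul_eq_right_of_isUnit_det _ _ hdet, hDr]
  · intro m hm hum
    have := hQ m (Finset.mem_filter.2 ⟨Finset.mem_univ _, hm, hum⟩)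
    have h : (k * t / d) * ((Aᵀ *ᵥ u m) ⬝ᵥ (Aᵀ *ᵥ u m)) ≤
        ∑ i : Fin d, (if i.val < k then (Aᵀ *ᵥ u m) i ^ 2 else 0) := not_lt.1 fun h' => this h'
    rw [← hDv, hdotAt] at h
    rw [lp2_sq, lp2_sq, ← mulVec_mulVec, ← mulVec_mulVec, hdotA]
    exact h

end OPS

/-- **Existence of an orthogonally preserving projection**. -/
theorem orthogonally_preservable_of_small_ratio
    (N d C k : ℕ) (σ δ : ℝ)
    (hN : 2 ≤ N) (hd : 2 ≤ d) (hC : 2 ≤ C) (hk1 : 1 ≤ k) (hkd : k ≤ d - 1)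
    (hσ : 0 < σ) (hδ : 0 < δ) (hσδ : σ < δ / 2)
    (hratio : 2 * σ / δ ≤ (1 / 2) * Real.sqrt ((k : ℝ) / ((d : ℝ) * Real.exp 1)) *
      (N : ℝ) ^ (-(2 : ℝ) / (k : ℝ))) :
    ∀ (X : Fin N → Fin d → ℝ) (Y : Fin N → ℕ),
      (∀ i, 1 ≤ Y i ∧ Y i ≤ C) → Separated 2 δ X Y →
      ∃ P : Matrix (Fin d) (Fin d) ℝ, P * P = P ∧ P.transpose = P ∧ P.rank = k ∧
        ∀ i j, Y i ≠ Y j → ∀ a a' : Fin d → ℝ,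
          lpNorm 2 (a - X i) ≤ σ → lpNorm 2 (a' - X j) ≤ σ →
          ((1 / 2) * Real.sqrt ((k : ℝ) / ((d : ℝ) * Real.exp 1)) *
              (N : ℝ) ^ (-(2 : ℝ) / (k : ℝ))) * lpNorm 2 (a - a') ≤
            lpNorm 2 (P.mulVec (a - a')) := by
  intro X Y _ hsep
  set n : ℝ := (N : ℝ) ^ (-(2 : ℝ) / (k : ℝ)) with hn
  have hkR : (0:ℝ) < k := by exact_mod_cast hk1
  have hdR : (0:ℝ) < d := by exact_mod_cast (by omega : 0 < d)
  have hNR : (0:ℝ) < N := by exact_mod_cast (by omega : 0 < N)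
  have hN1 : (1:ℝ) ≤ N := by exact_mod_cast (by omega : 1 ≤ N)
  have hkd' : k < d := by omega
  have hkdR : (k:ℝ) ≤ d := by exact_mod_cast hkd'.le
  have he : (1:ℝ) ≤ Real.exp 1 := Real.one_le_exp (by norm_num)
  have hn0 : 0 < n := Real.rpow_pos_of_pos hNR _
  have hn1 : n ≤ 1 := by
    refine Real.rpow_le_one_of_one_le_of_nonpos hN1 ?_
    exact div_nonpos_of_nonpos_of_nonneg (by norm_num) hkR.le
  have hnk : n ^ k * (N : ℝ) ^ 2 = 1 := by
    rw [hn, ← Real.rpow_natCast, ← Real.rpow_mul hNR.le, div_mul_cancel₀ _ hkR.ne',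
      Real.rpow_neg hNR.le]
    norm_num
    field_simp
  set r : ℝ := Real.sqrt ((k : ℝ) / ((d : ℝ) * Real.exp 1)) with hr
  have hr0 : 0 < r := Real.sqrt_pos.2 (by positivity)
  have hr1 : r ≤ 1 := by
    refine Real.sqrt_le_one.2 ?_
    rw [div_le_one (by positivity)]
    nlinarith
  have hr2 : r ^ 2 = (k : ℝ) / ((d : ℝ) * Real.exp 1) := Real.sq_sqrt (by positivity)
  set ε : ℝ := 1 / 2 * r * n with hε
  have hε0 : 0 < ε := by positivity
  have hε2 : ε ≤ 1 / 2 := by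
    have : r * n ≤ 1 := mul_le_one₀ hr1 hn0.le hn1
    rw [hε]; linarith
  obtain ⟨P, h1, h2, h3, h4⟩ := OPS.exists_proj hN hk1 hkd' (n ^ 2 / Real.exp 1) (by positivity)
    (by
      rw [div_le_one (by positivity)]
      nlinarith)
    (by
      rw [div_mul_cancel₀ _ (by positivity)]
      have : (n ^ 2) ^ k * ((N : ℝ) ^ 2) ^ 2 = (n ^ k * (N : ℝ) ^ 2) ^ 2 := by ring
      rw [this, hnk]; norm_num) (fun m => X m.1 - X m.2)
  refine ⟨P, h1, h2, h3, ?_⟩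
  intro i j hij a a' ha ha'
  have hδu := hsep.1 i j hij
  have hu0 : X i - X j ≠ 0 := by
    intro h0
    rw [h0, OPS.lp2] at hδu
    simp at hδu
    linarith
  refine OPS.geom P h1 h2 (X i - X j) (a - a') ε hε0 hε2 ?_ ?_
  · have h5 := h4 (i, j) (fun h => hij (by rw [show i = j from h])) hu0
    refine abs_le_of_sq_le_sq' ?_ (OPS.lp2_nonneg _) |>.2
    refine le_trans (le_of_eq ?_) h5
    have : (2 * ε) ^ 2 = k * (n ^ 2 / Real.exp 1) / d := by
      calc (2 * ε) ^ 2 = r ^ 2 * n ^ 2 := by rw [hε]; ring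
        _ = _ := by rw [hr2]; field_simp
    rw [mul_pow, this]
  · have h6 : lpNorm 2 (a - a' - (X i - X j)) ≤ 2 * σ := by
      have e : a - a' - (X i - X j) = (a - X i) - (a' - X j) := by abel
      rw [e]
      rw [OPS.lp2] at ha ha' ⊢
      rw [WithLp.toLp_sub]
      exact (norm_sub_le _ _).trans (by linarith)
    have h7 : 2 * σ ≤ ε * δ := (div_le_iff₀ hδ).1 hratio
    exact h6.trans (h7.trans (mul_le_mul_of_nonneg_left hδu hε0.le))

end
end

section
/- Let p ∈ (1, ∞) be a real number that is not a natural number, and let 0 < ε < 1. Then there is a universal constant C₀ such that there exists a feedforward ReLU neural network g : ℝ → ℝ of width 9 and depth at most C₀ · p · ε^{−1/p} · (log₂(p·ε^{−1}) + p) such that |g(α) − α^p| < ε for every α ∈ [0, 1]. -/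
open scoped ENNReal BigOperators

noncomputable section

/-! ### Generalized binomial coefficients, recursively -/

def bc (q : ℝ) : ℕ → ℝ
  | 0 => 1
  | m + 1 => bc q m * (q - m) / (m + 1)

lemma bc_succ_mul (q : ℝ) (m : ℕ) : bc q (m + 1) * (m + 1) = bc q m * (q - m) := by
  have : (m : ℝ) + 1 ≠ 0 := by positivity
  simp only [bc]; field_simp

lemma bc_absorb (q : ℝ) (m : ℕ) : bc (q + 1) (m + 1) * (m + 1) = (q + 1) * bc q m := by
  induction m with
  | zero => simp [bc]
  | succ m ih =>
    have h1 : (m : ℝ) + 1 ≠ 0 := by positivity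
    have h2 := bc_succ_mul (q + 1) (m + 1)
    have h3 := bc_succ_mul q m
    push_cast at *
    rw [h2]
    have : (bc (q + 1) (m + 1) * (q + 1 - (m + 1))) * (m + 1) = ((q + 1) * bc q (m + 1)) * (m + 1) := by
      linear_combination (q - m) * ih - (q + 1) * h3
    exact mul_right_cancel₀ h1 this

lemma bc_pascal (q : ℝ) (m : ℕ) : bc (q + 1) (m + 1) = bc q (m + 1) + bc q m := by
  have h1 : (m : ℝ) + 1 ≠ 0 := by positivity
  have h2 := bc_absorb q m
  have h3 := bc_succ_mul q m
  apply mul_right_cancel₀ h1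
  linear_combination h2 - h3

lemma bc_le_one (q : ℝ) (h0 : 0 ≤ q) (h1 : q ≤ 1) (m : ℕ) : |bc q m| ≤ 1 := by
  induction m with
  | zero => simp [bc]
  | succ m ih =>
    have hm : (0 : ℝ) < (m : ℝ) + 1 := by positivity
    have h3 : |q - m| ≤ m + 1 := by
      have : (0 : ℝ) ≤ m := by positivity
      rw [abs_le]; constructor <;> linarith
    simp only [bc]
    rw [abs_div, abs_mul, abs_of_pos hm, div_le_one hm]
    calc |bc q m| * |q - m| ≤ 1 * (m + 1) := by gcongr
      _ = _ := by ring

lemma bc_le_two_pow (n : ℕ) : ∀ q : ℝ, (n : ℝ) ≤ q → q ≤ n + 1 → ∀ m, |bc q m| ≤ 2 ^ n := by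
  induction n with
  | zero => intro q h0 h1 m; simpa using bc_le_one q (by simpa using h0) (by simpa using h1) m
  | succ n ih =>
    intro q h0 h1 m
    push_cast at h0 h1
    cases m with
    | zero => simpa [bc] using one_le_pow₀ (by norm_num : (1 : ℝ) ≤ 2)
    | succ m =>
      have h := bc_pascal (q - 1) m
      rw [sub_add_cancel] at h
      rw [h]
      have a := ih (q - 1) (by linarith) (by linarith) (m + 1)
      have b := ih (q - 1) (by linarith) (by linarith) m
      have d := abs_add_le (bc (q - 1) (m + 1)) (bc (q - 1) m)
      rw [pow_succ]
      linarith

/-- decay of the coefficients -/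
lemma bc_decay (n : ℕ) (p : ℝ) (hn : 1 ≤ n) (h0 : (n : ℝ) ≤ p) (h1 : p < n + 1) (k : ℕ) :
    |bc (p - 1) (n + k)| ≤ 2 ^ n * (((n : ℝ) + 1) / (n + k + 1)) ^ p := by
  have hp : 1 ≤ p := le_trans (by exact_mod_cast hn) h0
  induction k with
  | zero =>
    have : ((n : ℝ) + 1) / (n + (0 : ℕ) + 1) = 1 := by
      have : (n : ℝ) + 1 ≠ 0 := by positivity
      simp [div_self this]
    rw [this, Real.one_rpow, mul_one]
    obtain ⟨m, rfl⟩ : ∃ m, n = m + 1 := ⟨n - 1, by omega⟩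
    push_cast at h0 h1
    refine (bc_le_two_pow m (p - 1) (by linarith) (by linarith) _).trans ?_
    exact pow_le_pow_right₀ (by norm_num) (by omega)
  | succ k ih =>
    have hm : (0 : ℝ) < (n : ℝ) + k + 1 := by positivity
    have hk : (0 : ℝ) ≤ k := by positivity
    have e : bc (p - 1) (n + (k + 1)) = bc (p - 1) (n + k) * (p - 1 - (n + k)) / (n + k + 1) := by
      rw [← add_assoc]; simp only [bc]; push_cast; ring
    have hb : 1 - p / (n + k + 1) ≤ (((n : ℝ) + k + 1) / (n + k + 2)) ^ p := by
      have h := one_add_mul_self_le_rpow_one_add (s := -1 / ((n : ℝ) + k + 2)) (by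
        rw [le_div_iff₀ (by positivity)]; linarith) hp
      have e1 : 1 + -1 / ((n : ℝ) + k + 2) = ((n : ℝ) + k + 1) / (n + k + 2) := by
        field_simp; ring
      rw [e1] at h
      refine le_trans ?_ h
      have : p / (n + k + 2) ≤ p / (n + k + 1) := by gcongr; linarith
      have e2 : p * (-1 / ((n : ℝ) + k + 2)) = - (p / (n + k + 2)) := by ring
      rw [e2]; linarith
    have e3 : |p - 1 - ((n : ℝ) + k)| / (n + k + 1) = 1 - p / (n + k + 1) := by
      rw [abs_of_nonpos (by linarith)]; field_simp; ring
    rw [e, abs_div, abs_mul, abs_of_pos hm, mul_div_assoc, e3]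
    have hnn : 0 ≤ 1 - p / ((n : ℝ) + k + 1) := by rw [← e3]; positivity
    calc _ ≤ (2 ^ n * (((n : ℝ) + 1) / (n + k + 1)) ^ p) * (((n : ℝ) + k + 1) / (n + k + 2)) ^ p := by
          gcongr
      _ = 2 ^ n * ((((n : ℝ) + 1) / (n + k + 1)) * (((n : ℝ) + k + 1) / (n + k + 2))) ^ p := by
          rw [mul_assoc, Real.mul_rpow (by positivity) (by positivity)]
      _ = _ := by
          congr 2
          push_cast
          field_simp
          ring

/-! ### Truncated binomial series -/

def bs (p : ℝ) : ℕ → ℝ → ℝ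
  | 0, _ => 1
  | m + 1, t => bs p m t + bc p (m + 1) * (-t) ^ (m + 1)

lemma bs_zero (p : ℝ) (m : ℕ) : bs p m 0 = 1 := by
  induction m with
  | zero => rfl
  | succ m ih => simp [bs, ih]

lemma bs_one (q : ℝ) (m : ℕ) : bs (q + 1) m 1 = (-1) ^ m * bc q m := by
  induction m with
  | zero => simp [bs, bc]
  | succ m ih => simp only [bs]; rw [ih, bc_pascal]; ring

lemma bs_deriv (p t : ℝ) (m : ℕ) : ∃ d, HasDerivAt (bs p m) d t ∧
    (1 - t) * d + p * bs p m t = (p - m) * bc p m * (-t) ^ m := by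
  induction m with
  | zero =>
    refine ⟨0, ?_, by simp [bs, bc]⟩
    have : bs p 0 = fun _ => 1 := by funext x; rfl
    rw [this]; exact hasDerivAt_const _ _
  | succ m ih =>
    obtain ⟨d, hd, he⟩ := ih
    refine ⟨d + bc p (m + 1) * ((m + 1 : ℕ) * (-t) ^ m * (-1)), ?_, ?_⟩
    · have : bs p (m + 1) = fun t => bs p m t + bc p (m + 1) * (-t) ^ (m + 1) := by funext x; rfl
      rw [this]
      have h := ((hasDerivAt_id t).neg.pow (m + 1)).const_mul (bc p (m + 1))
      exact hd.add (by simpa using h)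
    · have h3 := bc_succ_mul p m
      simp only [bs]
      push_cast
      linear_combination he - (-t) ^ m * h3

lemma bs_error_aux (p σ t : ℝ) (m : ℕ) (hp : 0 < p) (hσ : |σ| = 1) (h0 : 0 ≤ t) (h1 : t < 1) :
    σ * (bs p m t - (1 - t) ^ p) ≤ |(p - m) * bc p m| / p := by
  set κ := (p - m) * bc p m with hκ
  let H : ℝ → ℝ := fun t => |κ| / p * (1 - t) ^ (-p) - σ * (bs p m t * (1 - t) ^ (-p))
  have hder : ∀ x ∈ Set.Ico (0 : ℝ) 1, ∃ d, 0 ≤ d ∧ HasDerivAt H d x := by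
    intro x hx
    have hx1 : 0 < 1 - x := by linarith [hx.2]
    obtain ⟨d, hd, he⟩ := bs_deriv p x m
    have hr : HasDerivAt (fun t : ℝ => (1 - t) ^ (-p)) (p * (1 - x) ^ (-p - 1)) x := by
      have h := ((hasDerivAt_id x).const_sub 1).rpow_const (p := -p) (Or.inl hx1.ne')
      simpa using h
    refine ⟨_, ?_, (hr.const_mul (|κ| / p)).sub ((hd.mul hr).const_mul σ)⟩
    have e1 : (1 - x) ^ (-p) = (1 - x) * (1 - x) ^ (-p - 1) := by
      rw [Real.rpow_sub_one hx1.ne']; field_simp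
    have e2 : |κ| / p * (p * (1 - x) ^ (-p - 1)) - σ * (d * (1 - x) ^ (-p) + bs p m x * (p * (1 - x) ^ (-p - 1)))
        = (|κ| - σ * (κ * (-x) ^ m)) * (1 - x) ^ (-p - 1) := by
      rw [e1]
      have : |κ| / p * (p * (1 - x) ^ (-p - 1)) = |κ| * (1 - x) ^ (-p - 1) := by field_simp
      rw [this]
      linear_combination (-σ * (1 - x) ^ (-p - 1)) * he
    rw [e2]
    apply mul_nonneg _ (Real.rpow_nonneg hx1.le _)
    have : |σ * (κ * (-x) ^ m)| ≤ |κ| := by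
      rw [abs_mul, hσ, one_mul, abs_mul, abs_pow, abs_neg, abs_of_nonneg hx.1]
      exact mul_le_of_le_one_right (abs_nonneg _) (pow_le_one₀ hx.1 hx.2.le)
    linarith [le_abs_self (σ * (κ * (-x) ^ m))]
  have hmono : MonotoneOn H (Set.Ico 0 1) := by
    apply monotoneOn_of_deriv_nonneg (convex_Ico 0 1)
    · intro x hx
      obtain ⟨d, _, h⟩ := hder x hx
      exact h.continuousAt.continuousWithinAt
    · intro x hx
      obtain ⟨d, _, h⟩ := hder x (interior_subset hx)
      exact h.differentiableAt.differentiableWithinAt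
    · intro x hx
      obtain ⟨d, hd, h⟩ := hder x (interior_subset hx)
      rw [h.deriv]; exact hd
  have h := hmono ⟨le_rfl, one_pos⟩ ⟨h0, h1⟩ h0
  simp only [H, sub_zero, Real.one_rpow, bs_zero, mul_one] at h
  have ht : 0 < 1 - t := by linarith
  have hpos : 0 < (1 - t) ^ p := Real.rpow_pos_of_pos ht _
  rw [Real.rpow_neg ht.le] at h
  have h2 := mul_le_mul_of_nonneg_right h hpos.le
  have e : (|κ| / p * ((1 - t) ^ p)⁻¹ - σ * (bs p m t * ((1 - t) ^ p)⁻¹)) * (1 - t) ^ p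
      = |κ| / p - σ * bs p m t := by field_simp
  rw [e] at h2
  have : 0 ≤ |κ| / p * (1 - t) ^ p := by positivity
  nlinarith

lemma bs_error (p t : ℝ) (m : ℕ) (hp : 0 < p) (h0 : 0 ≤ t) (h1 : t ≤ 1) :
    |bs p m t - (1 - t) ^ p| ≤ |bc (p - 1) m| := by
  rcases h1.lt_or_eq with h1 | rfl
  · have e : |(p - m) * bc p m| / p = |bc (p - 1) m| := by
      have a := bc_absorb (p - 1) m
      rw [sub_add_cancel] at a
      have b := bc_succ_mul p m
      have : (p - m) * bc p m = p * bc (p - 1) m := by linarith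
      rw [this, abs_mul, abs_of_pos hp]; field_simp
    rw [← e]
    have a := bs_error_aux p 1 t m hp (by simp) h0 h1
    have b := bs_error_aux p (-1) t m hp (by simp) h0 h1
    rw [abs_le]; constructor <;> linarith
  · have := bs_one (p - 1) m
    rw [sub_add_cancel] at this
    rw [this, sub_self, Real.zero_rpow hp.ne', sub_zero, abs_mul, abs_pow]
    simp

/-! ### Approximate multiplication -/

def hatf (x : ℝ) : ℝ := 2 * max x 0 - 4 * max (x - 1 / 2) 0

def hatI : ℕ → ℝ → ℝ
  | 0, x => x
  | k + 1, x => hatf (hatI k x)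

def prodI (x y : ℝ) : ℕ → ℝ
  | 0 => x - y
  | k + 1 => prodI x y k - (hatI (k + 1) x - hatI (k + 1) y) / 4 ^ (k + 1)

lemma hatf_spec (x : ℝ) (h0 : 0 ≤ x) (h1 : x ≤ 1) : 0 ≤ hatf x ∧ hatf x ≤ 1 ∧
    x - x ^ 2 = hatf x / 4 + (hatf x - hatf x ^ 2) / 4 := by
  unfold hatf
  rw [max_eq_left h0]
  rcases le_total x (1 / 2) with h | h
  · rw [max_eq_right (by linarith)]
    refine ⟨by linarith, by linarith, by ring⟩
  · rw [max_eq_left (by linarith)]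
    refine ⟨by linarith, by linarith, by ring⟩

lemma hatI_mem (k : ℕ) (x : ℝ) (h0 : 0 ≤ x) (h1 : x ≤ 1) : 0 ≤ hatI k x ∧ hatI k x ≤ 1 := by
  induction k with
  | zero => exact ⟨h0, h1⟩
  | succ k ih => exact ⟨(hatf_spec _ ih.1 ih.2).1, (hatf_spec _ ih.1 ih.2).2.1⟩

lemma prodI_eq (x y : ℝ) (hx0 : 0 ≤ x) (hx1 : x ≤ 1) (hy0 : 0 ≤ y) (hy1 : y ≤ 1) (k : ℕ) :
    prodI x y k = x ^ 2 - y ^ 2 +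
      ((hatI k x - hatI k x ^ 2) - (hatI k y - hatI k y ^ 2)) / 4 ^ k := by
  induction k with
  | zero => simp [prodI, hatI]; ring
  | succ k ih =>
    obtain ⟨a0, a1⟩ := hatI_mem k x hx0 hx1
    obtain ⟨b0, b1⟩ := hatI_mem k y hy0 hy1
    simp only [prodI, ih, hatI]
    rw [(hatf_spec _ a0 a1).2.2, (hatf_spec _ b0 b1).2.2, pow_succ]
    ring

lemma prodI_err (x y : ℝ) (hx0 : 0 ≤ x) (hx1 : x ≤ 1) (hy0 : 0 ≤ y) (hy1 : y ≤ 1) (k : ℕ) :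
    |prodI x y k - (x ^ 2 - y ^ 2)| ≤ 1 / 4 ^ k := by
  rw [prodI_eq x y hx0 hx1 hy0 hy1, add_sub_cancel_left, abs_div, abs_of_pos (by positivity : (0:ℝ) < 4 ^ k)]
  gcongr
  obtain ⟨a0, a1⟩ := hatI_mem k x hx0 hx1
  obtain ⟨b0, b1⟩ := hatI_mem k y hy0 hy1
  rw [abs_le]; constructor <;> nlinarith

/-- approximate powers of `t` -/
def powI (K : ℕ) (t : ℝ) : ℕ → ℝ
  | 0 => 1
  | m + 1 => max (1 - max (1 - prodI ((t + powI K t m) / 2)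
      ((max (t - powI K t m) 0 + max (powI K t m - t) 0) / 2) K) 0) 0

lemma powI_spec (K : ℕ) (t : ℝ) (h0 : 0 ≤ t) (h1 : t ≤ 1) (m : ℕ) :
    0 ≤ powI K t m ∧ powI K t m ≤ 1 ∧ |powI K t m - t ^ m| ≤ m * (1 / 4 ^ K) := by
  induction m with
  | zero => simp [powI]
  | succ m ih =>
    obtain ⟨a0, a1, ha⟩ := ih
    simp only [powI]
    set s := powI K t m
    have hab : max (t - s) 0 + max (s - t) 0 = |t - s| := by
      rcases le_total t s with h | h
      · rw [max_eq_right (by linarith), max_eq_left (by linarith), abs_of_nonpos (by linarith)]; ring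
      · rw [max_eq_left (by linarith), max_eq_right (by linarith), abs_of_nonneg (by linarith)]; ring
    rw [hab]
    have hle : |t - s| ≤ 1 := by rw [abs_le]; constructor <;> linarith
    have he := prodI_err ((t + s) / 2) (|t - s| / 2) (by linarith) (by linarith)
      (by positivity) (by linarith) K
    have e2 : ((t + s) / 2) ^ 2 - (|t - s| / 2) ^ 2 = t * s := by
      rw [div_pow, div_pow, sq_abs]; ring
    rw [e2] at he
    set P := prodI ((t + s) / 2) (|t - s| / 2) K
    have b0 : 0 ≤ t * s := mul_nonneg h0 a0
    have b1 : t * s ≤ 1 := mul_le_one₀ h1 a0 a1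
    have hc : |max (1 - max (1 - P) 0) 0 - t * s| ≤ 1 / 4 ^ K := by
      rw [abs_le] at he ⊢
      obtain ⟨u, v⟩ := he
      have hd : (0 : ℝ) ≤ 1 / 4 ^ K := by positivity
      rcases max_cases (1 - P) 0 with ⟨h, h'⟩ | ⟨h, h'⟩ <;> rw [h] <;>
      rcases max_cases (1 - (1 - P)) 0 with ⟨g, g'⟩ | ⟨g, g'⟩ <;> (try rw [g]) <;> 
      norm_num <;> constructor <;> norm_num at * <;> linarith
    refine ⟨le_max_right _ _, max_le (by linarith [le_max_right (1 - P) 0]) (by norm_num), ?_⟩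
    have e3 : |t * s - t ^ (m + 1)| ≤ m * (1 / 4 ^ K) := by
      have : t * s - t ^ (m + 1) = t * (s - t ^ m) := by ring
      rw [this, abs_mul, abs_of_nonneg h0]
      exact (mul_le_of_le_one_left (abs_nonneg _) h1).trans ha
    calc _ ≤ _ := abs_sub_le _ (t * s) _
      _ ≤ 1 / 4 ^ K + m * (1 / 4 ^ K) := add_le_add hc e3
      _ = _ := by push_cast; ring

/-- the accumulator -/
def accI (p : ℝ) (K : ℕ) (t : ℝ) : ℕ → ℝ
  | 0 => 1
  | m + 1 => accI p K t m + bc p (m + 1) * (-1) ^ (m + 1) * powI K t (m + 1)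

lemma accI_err (p B : ℝ) (hB : ∀ m, |bc p m| ≤ B) (K : ℕ) (t : ℝ) (h0 : 0 ≤ t) (h1 : t ≤ 1) (m : ℕ) :
    |accI p K t m - bs p m t| ≤ m ^ 2 * B * (1 / 4 ^ K) := by
  induction m with
  | zero => simp [accI, bs]
  | succ m ih =>
    have hB0 : 0 ≤ B := (abs_nonneg _).trans (hB 0)
    have h := (powI_spec K t h0 h1 (m + 1)).2.2
    have e : accI p K t (m + 1) - bs p (m + 1) t = (accI p K t m - bs p m t)
        + bc p (m + 1) * ((-1) ^ (m + 1) * (powI K t (m + 1) - t ^ (m + 1))) := by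
      simp only [accI, bs]; rw [neg_pow t]; ring
    rw [e]
    calc _ ≤ _ := abs_add_le _ _
      _ ≤ m ^ 2 * B * (1 / 4 ^ K) + B * (((m + 1 : ℕ) : ℝ) * (1 / 4 ^ K)) := by
          apply add_le_add ih
          rw [abs_mul, abs_mul, abs_pow, abs_neg, abs_one, one_pow, one_mul]
          exact mul_le_mul (hB _) h (abs_nonneg _) hB0
      _ = ((m : ℝ) ^ 2 + m + 1) * (B * (1 / 4 ^ K)) := by push_cast; ring
      _ ≤ ((m + 1 : ℕ) : ℝ) ^ 2 * (B * (1 / 4 ^ K)) := by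
          gcongr
          push_cast
          have : (0 : ℝ) ≤ m := by positivity
          nlinarith
      _ = _ := by ring

set_option linter.unusedSimpArgs false

/-! ### Networks -/

/-- `f` is the state after `k` hidden layers of width 9, for inputs in `[0,1]`. -/
def Comp9 (k : ℕ) (f : ℝ → Fin 9 → ℝ) : Prop :=
  ∀ rest : MLP 9 1, rest.width ≤ 9 → ∃ g : MLP 1 1, g.width = 9 ∧ g.depth = rest.depth + k ∧
    ∀ α : ℝ, 0 ≤ α → α ≤ 1 → g.eval (fun _ => α) = rest.eval (f α)

lemma Comp9.step {k : ℕ} {f f' : ℝ → Fin 9 → ℝ} (h : Comp9 k f) (W : Matrix (Fin 9) (Fin 9) ℝ)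
    (b : Fin 9 → ℝ)
    (hf : ∀ α : ℝ, 0 ≤ α → α ≤ 1 → ∀ i, f' α i = max ((W.mulVec (f α) + b) i) 0) :
    Comp9 (k + 1) f' := by
  intro rest hr
  obtain ⟨g, hw, hd, he⟩ := h (MLP.cons W b rest) (by simp [MLP.width, hr])
  refine ⟨g, hw, ?_, ?_⟩
  · rw [hd]; simp only [MLP.depth]; omega
  · intro α h0 h1
    rw [he α h0 h1]
    simp only [MLP.eval]
    congr 1
    funext i
    exact (hf α h0 h1 i).symm

def mainSt (t s A : ℝ) : Fin 9 → ℝ := ![t, s, max A 0, max (-A) 0, 0, 0, 0, 0, 0]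

def absSt (t s A : ℝ) : Fin 9 → ℝ :=
  ![t, s, max A 0, max (-A) 0, max (t - s) 0, max (s - t) 0, 0, 0, 0]

def sqSt (t A P X Y : ℝ) : Fin 9 → ℝ :=
  ![t, max A 0, max (-A) 0, max P 0, max (-P) 0, max X 0, max (X - 1 / 2) 0,
    max Y 0, max (Y - 1 / 2) 0]

lemma comp9_start : Comp9 1 (fun α => mainSt (1 - α) 1 1) := by
  intro rest hr
  refine ⟨MLP.cons (fun i _ => ![-1, 0, 0, 0, 0, 0, 0, 0, 0] i) ![1, 1, 1, 0, 0, 0, 0, 0, 0] rest,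
    by simp [MLP.width, hr], by simp [MLP.depth], ?_⟩
  intro α h0 h1
  simp only [MLP.eval]
  congr 1
  funext i
  fin_cases i <;> simp [mainSt, Matrix.mulVec, dotProduct]
  rw [max_eq_left (by linarith)]; ring

lemma pm (A : ℝ) : max A 0 - max (-A) 0 = A := max_zero_sub_max_neg_zero_eq_self A

lemma comp9_abs {k : ℕ} {t s A : ℝ → ℝ} (ht : ∀ α, 0 ≤ α → α ≤ 1 → 0 ≤ t α)
    (hs : ∀ α, 0 ≤ α → α ≤ 1 → 0 ≤ s α)
    (h : Comp9 k (fun α => mainSt (t α) (s α) (A α))) :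
    Comp9 (k + 1) (fun α => absSt (t α) (s α) (A α)) := by
  refine h.step !![1, 0, 0, 0, 0, 0, 0, 0, 0;
    0, 1, 0, 0, 0, 0, 0, 0, 0;
    0, 0, 1, -1, 0, 0, 0, 0, 0;
    0, 0, -1, 1, 0, 0, 0, 0, 0;
    1, -1, 0, 0, 0, 0, 0, 0, 0;
    -1, 1, 0, 0, 0, 0, 0, 0, 0;
    0, 0, 0, 0, 0, 0, 0, 0, 0;
    0, 0, 0, 0, 0, 0, 0, 0, 0;
    0, 0, 0, 0, 0, 0, 0, 0, 0] 0 ?_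
  intro α h0 h1 i
  have a := ht α h0 h1
  have b := hs α h0 h1
  have e := pm (A α)
  fin_cases i <;> simp [mainSt, absSt, Matrix.mulVec, dotProduct, Fin.sum_univ_succ] <;>
    first | done | assumption | (congr 1; done) | (congr 1; linarith)

lemma comp9_sq0 {k : ℕ} {t s A : ℝ → ℝ} (ht : ∀ α, 0 ≤ α → α ≤ 1 → 0 ≤ t α)
    (h : Comp9 k (fun α => absSt (t α) (s α) (A α))) :
    Comp9 (k + 1) (fun α => sqSt (t α) (A α)
      ((t α + s α) / 2 - (max (t α - s α) 0 + max (s α - t α) 0) / 2)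
      ((t α + s α) / 2) ((max (t α - s α) 0 + max (s α - t α) 0) / 2)) := by
  refine h.step !![1, 0, 0, 0, 0, 0, 0, 0, 0;
    0, 0, 1, -1, 0, 0, 0, 0, 0;
    0, 0, -1, 1, 0, 0, 0, 0, 0;
    1/2, 1/2, 0, 0, -1/2, -1/2, 0, 0, 0;
    -1/2, -1/2, 0, 0, 1/2, 1/2, 0, 0, 0;
    1/2, 1/2, 0, 0, 0, 0, 0, 0, 0;
    1/2, 1/2, 0, 0, 0, 0, 0, 0, 0;
    0, 0, 0, 0, 1/2, 1/2, 0, 0, 0;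
    0, 0, 0, 0, 1/2, 1/2, 0, 0, 0] ![0, 0, 0, 0, 0, 0, -1/2, 0, -1/2] ?_
  intro α h0 h1 i
  have a := ht α h0 h1
  have e := pm (A α)
  fin_cases i <;> simp [sqSt, absSt, Matrix.mulVec, dotProduct, Fin.sum_univ_succ] <;>
    first | assumption | (congr 1; linarith)

lemma comp9_sqstep {k : ℕ} {t A P X Y : ℝ → ℝ} (c : ℝ) (ht : ∀ α, 0 ≤ α → α ≤ 1 → 0 ≤ t α)
    (h : Comp9 k (fun α => sqSt (t α) (A α) (P α) (X α) (Y α))) :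
    Comp9 (k + 1) (fun α => sqSt (t α) (A α) (P α - (hatf (X α) - hatf (Y α)) / c)
      (hatf (X α)) (hatf (Y α))) := by
  refine h.step !![1, 0, 0, 0, 0, 0, 0, 0, 0;
    0, 1, -1, 0, 0, 0, 0, 0, 0;
    0, -1, 1, 0, 0, 0, 0, 0, 0;
    0, 0, 0, 1, -1, -2*c⁻¹, 4*c⁻¹, 2*c⁻¹, -4*c⁻¹;
    0, 0, 0, -1, 1, 2*c⁻¹, -4*c⁻¹, -2*c⁻¹, 4*c⁻¹;
    0, 0, 0, 0, 0, 2, -4, 0, 0;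
    0, 0, 0, 0, 0, 2, -4, 0, 0;
    0, 0, 0, 0, 0, 0, 0, 2, -4;
    0, 0, 0, 0, 0, 0, 0, 2, -4] ![0, 0, 0, 0, 0, 0, -1/2, 0, -1/2] ?_
  intro α h0 h1 i
  have a := ht α h0 h1
  have e := pm (A α)
  have e' := pm (P α)
  fin_cases i <;> simp [sqSt, hatf, Matrix.mulVec, dotProduct, Fin.sum_univ_succ, div_eq_mul_inv] <;>
    first | assumption | (congr 1; linarith)

lemma comp9_clamp {k : ℕ} {t A P X Y : ℝ → ℝ} (ht : ∀ α, 0 ≤ α → α ≤ 1 → 0 ≤ t α)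
    (h : Comp9 k (fun α => sqSt (t α) (A α) (P α) (X α) (Y α))) :
    Comp9 (k + 1) (fun α => mainSt (t α) (max (1 - P α) 0) (A α)) := by
  refine h.step !![1, 0, 0, 0, 0, 0, 0, 0, 0;
    0, 0, 0, -1, 1, 0, 0, 0, 0;
    0, 1, -1, 0, 0, 0, 0, 0, 0;
    0, -1, 1, 0, 0, 0, 0, 0, 0;
    0, 0, 0, 0, 0, 0, 0, 0, 0;
    0, 0, 0, 0, 0, 0, 0, 0, 0;
    0, 0, 0, 0, 0, 0, 0, 0, 0;
    0, 0, 0, 0, 0, 0, 0, 0, 0;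
    0, 0, 0, 0, 0, 0, 0, 0, 0] ![0, 1, 0, 0, 0, 0, 0, 0, 0] ?_
  intro α h0 h1 i
  have a := ht α h0 h1
  have e := pm (A α)
  have e' := pm (P α)
  fin_cases i <;> simp [sqSt, mainSt, Matrix.mulVec, dotProduct, Fin.sum_univ_succ] <;>
    first | assumption | (congr 1; linarith)

lemma comp9_flip {k : ℕ} {t s A : ℝ → ℝ} (ht : ∀ α, 0 ≤ α → α ≤ 1 → 0 ≤ t α)
    (h : Comp9 k (fun α => mainSt (t α) (s α) (A α))) :
    Comp9 (k + 1) (fun α => mainSt (t α) (max (1 - s α) 0) (A α)) := by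
  refine h.step !![1, 0, 0, 0, 0, 0, 0, 0, 0;
    0, -1, 0, 0, 0, 0, 0, 0, 0;
    0, 0, 1, -1, 0, 0, 0, 0, 0;
    0, 0, -1, 1, 0, 0, 0, 0, 0;
    0, 0, 0, 0, 0, 0, 0, 0, 0;
    0, 0, 0, 0, 0, 0, 0, 0, 0;
    0, 0, 0, 0, 0, 0, 0, 0, 0;
    0, 0, 0, 0, 0, 0, 0, 0, 0;
    0, 0, 0, 0, 0, 0, 0, 0, 0] ![0, 1, 0, 0, 0, 0, 0, 0, 0] ?_
  intro α h0 h1 i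
  have a := ht α h0 h1
  have e := pm (A α)
  fin_cases i <;> simp [mainSt, Matrix.mulVec, dotProduct, Fin.sum_univ_succ] <;>
    first | assumption | (congr 1; linarith)

lemma comp9_acc {k : ℕ} {t s A : ℝ → ℝ} (c : ℝ) (ht : ∀ α, 0 ≤ α → α ≤ 1 → 0 ≤ t α)
    (hs : ∀ α, 0 ≤ α → α ≤ 1 → 0 ≤ s α)
    (h : Comp9 k (fun α => mainSt (t α) (s α) (A α))) :
    Comp9 (k + 1) (fun α => mainSt (t α) (s α) (A α + c * s α)) := by
  refine h.step !![1, 0, 0, 0, 0, 0, 0, 0, 0;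
    0, 1, 0, 0, 0, 0, 0, 0, 0;
    0, c, 1, -1, 0, 0, 0, 0, 0;
    0, -c, -1, 1, 0, 0, 0, 0, 0;
    0, 0, 0, 0, 0, 0, 0, 0, 0;
    0, 0, 0, 0, 0, 0, 0, 0, 0;
    0, 0, 0, 0, 0, 0, 0, 0, 0;
    0, 0, 0, 0, 0, 0, 0, 0, 0;
    0, 0, 0, 0, 0, 0, 0, 0, 0] 0 ?_
  intro α h0 h1 i
  have a := ht α h0 h1
  have b := hs α h0 h1
  have e := pm (A α)
  fin_cases i <;> simp [mainSt, Matrix.mulVec, dotProduct, Fin.sum_univ_succ] <;>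
    first | assumption | (congr 1; linarith)

lemma comp9_sqiter {k : ℕ} {t A x y : ℝ → ℝ} (ht : ∀ α, 0 ≤ α → α ≤ 1 → 0 ≤ t α)
    (h : Comp9 k (fun α => sqSt (t α) (A α) (x α - y α) (x α) (y α))) (K : ℕ) :
    Comp9 (k + K) (fun α => sqSt (t α) (A α) (prodI (x α) (y α) K) (hatI K (x α)) (hatI K (y α))) := by
  induction K with
  | zero => exact h
  | succ K ih => exact comp9_sqstep (4 ^ (K + 1)) ht ih

lemma comp9_main (p : ℝ) (K m : ℕ) :
    Comp9 (1 + m * (K + 5)) (fun α => mainSt (1 - α) (powI K (1 - α) m) (accI p K (1 - α) m)) := by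
  induction m with
  | zero => simpa [powI, accI] using comp9_start
  | succ m ih =>
    have ht : ∀ α : ℝ, 0 ≤ α → α ≤ 1 → 0 ≤ 1 - α := fun α _ h => by linarith
    have hs : ∀ m, ∀ α : ℝ, 0 ≤ α → α ≤ 1 → 0 ≤ powI K (1 - α) m := fun m α h0 h1 =>
      (powI_spec K (1 - α) (by linarith) (by linarith) m).1
    have h1 := comp9_sqiter ht (comp9_sq0 ht (comp9_abs ht (hs m) ih)) K
    have h2 := comp9_flip ht (comp9_clamp ht h1)
    have h3 := comp9_acc (s := fun α => powI K (1 - α) (m + 1)) (bc p (m + 1) * (-1) ^ (m + 1)) ht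
      (hs (m + 1)) h2
    have e : 1 + (m + 1) * (K + 5) = 1 + m * (K + 5) + 1 + 1 + K + 1 + 1 + 1 := by ring
    rw [e]
    exact h3

lemma network_exists (p : ℝ) (K m : ℕ) : ∃ g : MLP 1 1, g.width = 9 ∧
    g.depth = 2 + m * (K + 5) ∧
    ∀ α : ℝ, 0 ≤ α → α ≤ 1 → g.eval (fun _ => α) 0 = accI p K (1 - α) m := by
  obtain ⟨g, hw, hd, he⟩ := comp9_main p K m
    (MLP.last !![0, 0, 1, -1, 0, 0, 0, 0, 0] 0) (by simp [MLP.width])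
  refine ⟨g, hw, by rw [hd]; simp only [MLP.depth]; omega, ?_⟩
  intro α h0 h1
  rw [he α h0 h1]
  have e := pm (accI p K (1 - α) m)
  simp [MLP.eval, mainSt, Matrix.mulVec, dotProduct, Fin.sum_univ_succ]
  linarith

/-- **Network approximation of the `p`-th power, non-integer real `p > 1`**. -/
theorem power_approximation_network_real :
    ∃ C₀ : ℝ, 0 < C₀ ∧
      ∀ (p ε : ℝ), 1 < p → (¬ ∃ n : ℕ, p = (n : ℝ)) → 0 < ε → ε < 1 →
        ∃ g : MLP 1 1, g.width = 9 ∧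
          (g.depth : ℝ) ≤ C₀ * p * ε ^ (-(1 : ℝ) / p) * (Real.logb 2 (p * ε⁻¹) + p) ∧
          ∀ α : ℝ, 0 ≤ α → α ≤ 1 → |g.eval (fun _ => α) 0 - α ^ p| < ε := by
  refine ⟨200, by norm_num, ?_⟩
  intro p ε hp _ hε hε1
  have hp0 : 0 < p := by linarith
  set n := ⌊p⌋₊ with hn
  have hn0 : (n : ℝ) ≤ p := Nat.floor_le hp0.le
  have hn1 : p < n + 1 := Nat.lt_floor_add_one p
  have hn2 : 1 ≤ n := by rw [hn, Nat.one_le_floor_iff]; exact hp.le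
  set E := ε ^ (-(1 : ℝ) / p) with hE
  have hE1 : 1 ≤ E := Real.one_le_rpow_of_pos_of_le_one_of_nonpos hε hε1.le
    (div_nonpos_of_nonpos_of_nonneg (by norm_num) hp0.le)
  have hE2 : E ≤ ε⁻¹ := by
    rw [← Real.rpow_neg_one]
    apply Real.rpow_le_rpow_of_exponent_ge hε hε1.le
    rw [le_div_iff₀ hp0]; linarith
  have hEp : E ^ p = ε⁻¹ := by
    rw [hE, ← Real.rpow_mul hε.le, div_mul_cancel₀ _ hp0.ne', Real.rpow_neg_one]
  set R := p * ε⁻¹ with hR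
  have hεi : 1 < ε⁻¹ := (one_lt_inv₀ hε).2 hε1
  have hR1 : 1 < R := by nlinarith
  set L := Real.logb 2 R + p with hL
  have hlog : 0 < Real.logb 2 R := Real.logb_pos (by norm_num) hR1
  have hL1 : 1 ≤ L := by linarith
  set M := n + ⌈8 * p * E⌉₊ with hM
  have hpE : 1 ≤ p * E := by nlinarith
  have hc1 : 8 * p * E ≤ (⌈8 * p * E⌉₊ : ℝ) := Nat.le_ceil _
  have hc2 : (⌈8 * p * E⌉₊ : ℝ) < 8 * p * E + 1 := Nat.ceil_lt_add_one (by positivity)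
  have hMle : (M : ℝ) ≤ 10 * (p * E) := by
    rw [hM]; push_cast; nlinarith
  set K := ⌈8 + 3 * L⌉₊ with hK
  have hK1 : 8 + 3 * L ≤ (K : ℝ) := Nat.le_ceil _
  have hK2 : (K : ℝ) < 8 + 3 * L + 1 := Nat.ceil_lt_add_one (by positivity)
  obtain ⟨g, hw, hd, he⟩ := network_exists p K M
  refine ⟨g, hw, ?_, ?_⟩
  · rw [hd]; push_cast
    have h1 : (M : ℝ) * (K + 5) ≤ 10 * (p * E) * (17 * L) := by
      gcongr; linarith
    have h2 : 1 ≤ p * E * L := by nlinarith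
    nlinarith
  · intro α h0 h1
    rw [he α h0 h1]
    have hB : ∀ m, |bc p m| ≤ (2 : ℝ) ^ n := bc_le_two_pow n p hn0 hn1.le
    have a := accI_err p _ hB K (1 - α) (by linarith) (by linarith) M
    have b := bs_error p (1 - α) M hp0 (by linarith) (by linarith)
    rw [sub_sub_cancel] at b
    have c := bc_decay n p hn2 hn0 hn1 ⌈8 * p * E⌉₊
    have h2n : (2 : ℝ) ^ n ≤ 2 ^ p := by
      rw [← Real.rpow_natCast]; exact Real.rpow_le_rpow_of_exponent_le (by norm_num) hn0
    have hbase : ((n : ℝ) + 1) / (n + ⌈8 * p * E⌉₊ + 1) ≤ 1 / (4 * E) := by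
      rw [div_le_div_iff₀ (by positivity) (by positivity)]
      have : ((n : ℝ) + 1) * E ≤ 2 * p * E := by gcongr; linarith
      have : (0 : ℝ) ≤ n := by positivity
      nlinarith
    have c' : |bc (p - 1) M| ≤ ε / 2 := by
      refine c.trans ?_
      have hE0 : 0 < E := by linarith
      calc _ ≤ (2 : ℝ) ^ p * (1 / (4 * E)) ^ p := by gcongr
        _ = (1 / 2 * E⁻¹) ^ p := by
          rw [← Real.mul_rpow (by norm_num) (by positivity)]; congr 1; field_simp; norm_num
        _ = (1 / 2) ^ p * ε := by
          rw [Real.mul_rpow (by norm_num) (by positivity), Real.inv_rpow hE0.le, hEp, inv_inv]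
        _ ≤ (1 / 2) ^ (1 : ℝ) * ε := by
          gcongr ?_ * _
          exact Real.rpow_le_rpow_of_exponent_ge (by norm_num) (by norm_num) hp.le
        _ = ε / 2 := by rw [Real.rpow_one]; ring
    have a' : (M : ℝ) ^ 2 * 2 ^ n * (1 / 4 ^ K) < ε / 2 := by
      have hR0 : 0 < R := by linarith
      have hMR : (M : ℝ) ≤ 10 * R := by
        refine hMle.trans ?_
        rw [hR]; gcongr
      have hRε : ε⁻¹ ≤ R := by rw [hR]; nlinarith
      have hK3 : 256 * R ^ 3 * (2 : ℝ) ^ p ≤ 4 ^ K := by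
        have e1 : (2 : ℝ) ^ (8 + 3 * Real.logb 2 R + p) = 256 * R ^ 3 * (2 : ℝ) ^ p := by
          rw [Real.rpow_add (by norm_num), Real.rpow_add (by norm_num), mul_comm 3 (Real.logb 2 R),
            Real.rpow_mul (by norm_num), Real.rpow_logb (by norm_num) (by norm_num) hR0]
          norm_num
        rw [← e1]
        calc _ ≤ (2 : ℝ) ^ (K : ℝ) :=
              Real.rpow_le_rpow_of_exponent_le (by norm_num) (by linarith)
          _ = 2 ^ K := Real.rpow_natCast _ _
          _ ≤ 4 ^ K := by gcongr; norm_num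
      have hP : (0 : ℝ) < 2 ^ p := by positivity
      rw [mul_one_div, div_lt_iff₀ (by positivity)]
      have e2 : (1 : ℝ) ≤ R * ε := by
        rw [hR, mul_assoc, inv_mul_cancel₀ hε.ne']; linarith
      calc (M : ℝ) ^ 2 * 2 ^ n ≤ (10 * R) ^ 2 * 2 ^ p := by gcongr
        _ = 100 * (R ^ 2 * 2 ^ p) * 1 := by ring
        _ < 128 * (R ^ 2 * 2 ^ p) * 1 := by gcongr; norm_num
        _ ≤ 128 * (R ^ 2 * 2 ^ p) * (R * ε) := by gcongr
        _ = ε / 2 * (256 * R ^ 3 * (2 : ℝ) ^ p) := by ring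
        _ ≤ _ := by gcongr
    calc _ ≤ _ := abs_sub_le _ (bs p M (1 - α)) _
      _ < ε := by linarith

end
end

section
/- Let k ∈ ℕ, let 0 < r ≤ R, and set Δ_k = √2 · (5k·ln(k+1)·√(2π(k+1)))^{1/k}. If m is a natural number with (Δ_k · R / r)^k < m, then there exist points v₁, …, v_m on the Euclidean sphere ∂B₂^{k+1}(0, R) = {x ∈ ℝ^{k+1} : ‖x‖₂ = R} such that ∂B₂^{k+1}(0, R) ⊆ ⋃_{i=1}^m B₂^{k+1}(v_i, r), where B₂^{k+1}(v, r) is the closed Euclidean ball of radius r around v. -/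
open scoped ENNReal BigOperators

noncomputable section

section Helpers
open MeasureTheory

/-- Euclidean space. -/
abbrev EE (k:ℕ) := EuclideanSpace ℝ (Fin (k+1))

/-- The part of the unit ball lying over the spherical cap of chordal radius `s` about `u`. -/
def capS {k:ℕ} (u : EE k) (s : ℝ) : Set (EE k) := {z | z ≠ 0 ∧ ‖z‖ ≤ 1 ∧ (1 - s^2/2) * ‖z‖ ≤ inner ℝ z u}

lemma capS_meas {k:ℕ} (u : EE k) (s : ℝ) : MeasurableSet (capS u s) := by
  unfold capS
  have h1 : MeasurableSet {z : EE k | z ≠ 0} := (measurableSet_singleton (0:EE k)).compl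
  have h2 : IsClosed {z : EE k | ‖z‖ ≤ 1} := isClosed_le continuous_norm continuous_const
  have h3 : IsClosed {z : EE k | (1 - s^2/2) * ‖z‖ ≤ inner ℝ z u} :=
    isClosed_le (by fun_prop) (by fun_prop)
  exact h1.inter (h2.measurableSet.inter h3.measurableSet)

lemma capS_dist {k:ℕ} {u z : EE k} {s : ℝ} (hs : 0 ≤ s) (hu : ‖u‖ = 1) (hz : z ∈ capS u s) :
    ‖u - (‖z‖⁻¹ : ℝ) • z‖ ≤ s := by
  obtain ⟨h0, h1, h2⟩ := hz
  have hz : 0 < ‖z‖ := norm_pos_iff.mpr h0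
  apply abs_le_of_sq_le_sq' _ hs |>.2
  rw [norm_sub_sq_real, hu, norm_smul, inner_smul_right, real_inner_comm]
  simp only [norm_inv, norm_norm]
  rw [inv_mul_cancel₀ hz.ne']
  have : 1 - s^2/2 ≤ ‖z‖⁻¹ * inner ℝ z u := by
    rw [inv_mul_eq_div, le_div_iff₀ hz]; exact h2
  linarith

lemma capS_vol {k:ℕ} (u : EE k) (s β l : ℝ) (hs : 0 < s) (hs1 : s ≤ 1) (hu : ‖u‖ = 1)
    (hβ : 0 < β) (hβs : β^2 = s^2 * (1 - s^2/4)) (hl : 0 < l) (hl1 : l < 1) :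
    ENNReal.ofReal ((1-l) * (l*β)^k / 2) * volume (Metric.closedBall (0:EE k) 1) ≤ volume (capS u s) := by
  set γ := 1 - s^2/2 with hγ
  have hγβ : γ^2 + β^2 = 1 := by rw [hβs, hγ]; ring
  have hγ0 : 0 < γ := by nlinarith
  have hγ1 : γ ≤ 1 := by nlinarith
  set H : Set (EE k) := {x | ‖x‖ ≤ 1 ∧ 0 ≤ inner ℝ x u} with hH
  have hHvol : volume (Metric.closedBall (0:EE k) 1) ≤ 2 * volume H := by
    have : Metric.closedBall (0:EE k) 1 ⊆ H ∪ (-H) := by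
      intro x hx
      simp only [mem_closedBall_zero_iff] at hx
      rcases le_total 0 (inner ℝ x u) with h | h
      · left; exact ⟨hx, h⟩
      · right; simp [hH, hx, inner_neg_left]; exact h
    refine (measure_mono this).trans ((measure_union_le _ _).trans ?_)
    rw [Measure.measure_neg, two_mul]
  set a := 1 - l
  set b := l * β
  have hb : 0 < b := by positivity
  have ha : 0 < a := by simp only [a]; linarith
  let T : EE k →ₗ[ℝ] EE k := b • LinearMap.transvection ((a/b-1) • (innerₛₗ ℝ u)) u
  have hTx : ∀ x, T x = b • x + ((a-b) * inner ℝ x u) • u := by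
    intro x
    simp only [T, LinearMap.smul_apply, LinearMap.transvection.apply, smul_add, smul_smul, innerₛₗ_apply_apply, smul_eq_mul]
    rw [real_inner_comm]; congr 2; field_simp
  have hdet : LinearMap.det T = a * b^k := by
    simp only [T, LinearMap.det_smul, LinearMap.transvection.det]
    simp [hu]; field_simp; ring
  have hsub : (fun z => (l*γ) • u + z) '' (T '' H) ⊆ capS u s := by
    rintro _ ⟨_, ⟨x, ⟨hx1, hx2⟩, rfl⟩, rfl⟩
    set τ := inner ℝ x u with hτ
    have hτ1 : τ ≤ 1 := by
      have := real_inner_le_norm x u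
      rw [hu] at this; linarith
    have hzu : inner ℝ ((l*γ) • u + T x) u = l*γ + a * τ := by
      rw [hTx, inner_add_left, inner_add_left, real_inner_smul_left, real_inner_smul_left, real_inner_smul_left, real_inner_self_eq_norm_sq, hu]
      rw [← hτ]; ring
    have hxx : ‖x‖^2 ≤ 1 := by nlinarith [norm_nonneg x]
    have hzz : ‖(l*γ) • u + T x‖^2 = (l*γ + a*τ)^2 + b^2 * (‖x‖^2 - τ^2) := by
      rw [← real_inner_self_eq_norm_sq, ← real_inner_self_eq_norm_sq, hTx]
      simp only [inner_add_left, inner_add_right, real_inner_smul_left, real_inner_smul_right]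
      rw [real_inner_comm x u, real_inner_self_eq_norm_sq u, hu, ← hτ]
      ring
    have hlg : 0 < l * γ := by positivity
    have haτ : 0 ≤ a * τ := mul_nonneg ha.le hx2
    have hbl : b^2 + (l*γ)^2 = l^2 := by
      have : b^2 + (l*γ)^2 = l^2 * (γ^2+β^2) := by simp only [b]; ring
      rw [this, hγβ, mul_one]
    have h1 : b^2 * (‖x‖^2 - τ^2) ≤ b^2 :=
      mul_le_of_le_one_right (sq_nonneg _) (by linarith [sq_nonneg τ])
    refine ⟨?_, ?_, ?_⟩
    · intro h0
      simp only at h0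
      rw [h0, inner_zero_left] at hzu
      linarith
    · apply (abs_le_of_sq_le_sq' _ zero_le_one).2
      simp only
      rw [hzz]
      have h2 : l*γ*(a*τ) ≤ l * (a*τ) := by
        apply mul_le_mul_of_nonneg_right _ haτ
        nlinarith
      have h3 : a*τ ≤ a := mul_le_of_le_one_right ha.le hτ1
      have h4 : l + a*τ ≤ 1 := by linarith [show a = 1 - l from rfl]
      have h5 : (l + a*τ)^2 ≤ 1 := by
        rw [sq_le_one_iff₀ (by positivity)]; exact h4
      linarith [add_sq (l*γ) (a*τ), add_sq l (a*τ)]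
    · simp only
      rw [hzu]
      apply (abs_le_of_sq_le_sq' _ (by positivity)).2
      rw [mul_pow, hzz]
      have h2 : γ^2 * (b^2 * (‖x‖^2 - τ^2)) ≤ γ^2 * b^2 := mul_le_mul_of_nonneg_left h1 (sq_nonneg _)
      have h3 : γ^2*b^2 = β^2 * (l*γ)^2 := by simp only [b]; ring
      have h4 : (l*γ)^2 ≤ (l*γ + a*τ)^2 := by nlinarith
      have h5 : β^2 * (l*γ)^2 ≤ β^2 * (l*γ + a*τ)^2 := mul_le_mul_of_nonneg_left h4 (sq_nonneg _)
      have h6 : (1 - s^2/2)^2 = 1 - β^2 := by rw [← hγ]; linarith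
      rw [← hγ] at h6 ⊢
      rw [mul_add]
      have h8 : γ^2 * (l*γ + a*τ)^2 = (l*γ + a*τ)^2 - β^2 * (l*γ + a*τ)^2 := by rw [h6]; ring
      linarith
  refine le_trans ?_ (measure_mono hsub)
  rw [Set.image_add_left, measure_preimage_add, Measure.addHaar_image_linearMap, hdet, abs_of_pos (by positivity)]
  calc _ ≤ ENNReal.ofReal (a * b^k / 2) * (2 * volume H) := by gcongr
    _ = _ := by
      rw [← mul_assoc]; congr 1
      rw [show (2:ENNReal) = ENNReal.ofReal 2 by simp, ← ENNReal.ofReal_mul (by positivity)]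
      congr 1; ring

lemma sphere_packing {k:ℕ} (S : Finset (EE k)) (s q : ℝ) (hs : 0 < s) (hq : 0 ≤ q)
    (hS : ∀ u ∈ S, ‖u‖ = 1) (hsep : ∀ u ∈ S, ∀ v ∈ S, u ≠ v → 2 * s < ‖u - v‖)
    (hvol : ∀ u : EE k, ‖u‖ = 1 →
      ENNReal.ofReal q * volume (Metric.closedBall (0:EE k) 1) ≤ volume (capS u s)) :
    (S.card : ℝ) * q ≤ 1 := by
  have hdisj : (S : Set (EE k)).PairwiseDisjoint (fun u => capS u s) := by
    intro u hu v hv huv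
    rw [Function.onFun, Set.disjoint_left]
    intro z hz1 hz2
    have h1 := capS_dist hs.le (hS u hu) hz1
    have h2 := capS_dist hs.le (hS v hv) hz2
    have h3 := hsep u hu v hv huv
    have h4 : ‖u - v‖ ≤ ‖u - (‖z‖⁻¹ : ℝ) • z‖ + ‖v - (‖z‖⁻¹ : ℝ) • z‖ := by
      rw [norm_sub_rev v]
      exact norm_sub_le_norm_sub_add_norm_sub _ _ _
    linarith
  have hB0 : volume (Metric.closedBall (0:EE k) 1) ≠ 0 :=
    (Metric.measure_closedBall_pos volume 0 one_pos).ne'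
  have hBt : volume (Metric.closedBall (0:EE k) 1) ≠ ⊤ := measure_closedBall_lt_top.ne
  have h1 : volume (⋃ u ∈ S, capS u s) ≤ volume (Metric.closedBall (0:EE k) 1) := by
    apply measure_mono
    intro z hz
    simp only [Set.mem_iUnion] at hz
    obtain ⟨u, _, hz⟩ := hz
    simpa using hz.2.1
  rw [measure_biUnion_finset hdisj (fun u _ => capS_meas u s)] at h1
  have h2 : (S.card : ENNReal) * (ENNReal.ofReal q * volume (Metric.closedBall (0:EE k) 1))
      ≤ ∑ u ∈ S, volume (capS u s) := by
    rw [← nsmul_eq_mul]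
    exact Finset.card_nsmul_le_sum _ _ _ (fun u hu => hvol u (hS u hu))
  have h3 : (S.card : ENNReal) * ENNReal.ofReal q ≤ 1 := by
    have := h2.trans h1
    rw [← mul_assoc] at this
    by_contra hlt
    push Not at hlt
    have h5 := ENNReal.mul_lt_mul_left hB0 hBt hlt
    rw [one_mul] at h5
    exact absurd this (not_le.mpr h5)
  rw [← ENNReal.ofReal_natCast, ← ENNReal.ofReal_mul (by positivity), ENNReal.ofReal_le_one] at h3
  exact h3

lemma sphere_net {k:ℕ} (s q : ℝ) (hs : 0 < s) (hq : 0 < q)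
    (hvol : ∀ u : EE k, ‖u‖ = 1 →
      ENNReal.ofReal q * volume (Metric.closedBall (0:EE k) 1) ≤ volume (capS u s)) :
    ∃ S : Finset (EE k), (∀ u ∈ S, ‖u‖ = 1) ∧ (∀ x : EE k, ‖x‖ = 1 → ∃ u ∈ S, ‖x - u‖ ≤ 2 * s) ∧
      (S.card : ℝ) * q ≤ 1 := by
  classical
  let P : ℕ → Prop := fun n => ∃ S : Finset (EE k), S.card = n ∧ (∀ u ∈ S, ‖u‖ = 1) ∧
    (∀ u ∈ S, ∀ v ∈ S, u ≠ v → 2 * s < ‖u - v‖)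
  have hP0 : P 0 := ⟨∅, by simp⟩
  have hb : ∀ n, P n → n ≤ ⌊1/q⌋₊ := by
    rintro n ⟨S, rfl, h1, h2⟩
    apply Nat.le_floor
    rw [le_div_iff₀ hq]
    exact sphere_packing S s q hs hq.le h1 h2 hvol
  have hg := Nat.findGreatest_spec (P := P) (Nat.zero_le ⌊1/q⌋₊) hP0
  obtain ⟨S, hc, h1, h2⟩ := hg
  refine ⟨S, h1, ?_, sphere_packing S s q hs hq.le h1 h2 hvol⟩
  intro x hx
  by_contra! hcon
  have hxS : x ∉ S := fun h => by
    have := hcon x h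
    simp at this; linarith
  have hP : P (S.card + 1) := by
    refine ⟨insert x S, Finset.card_insert_of_notMem hxS, ?_, ?_⟩
    · intro u hu
      rcases Finset.mem_insert.mp hu with rfl | hu
      · exact hx
      · exact h1 u hu
    · intro u hu v hv huv
      rcases Finset.mem_insert.mp hu with hux | hu2
      · rcases Finset.mem_insert.mp hv with hvx | hv2
        · exact absurd (hux.trans hvx.symm) huv
        · rw [hux]; exact hcon v hv2
      · rcases Finset.mem_insert.mp hv with hvx | hv2
        · rw [norm_sub_rev, hvx]; exact hcon u hu2
        · exact h2 u hu2 v hv2 huv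
  have := Nat.le_findGreatest (hb _ hP) hP
  omega

lemma greedy_step {k:ℕ} (S : Finset (EE k)) (s q : ℝ) (hs : 0 < s) (hq : 0 < q)
    (hS : ∀ u ∈ S, ‖u‖ = 1)
    (hvol : ∀ u : EE k, ‖u‖ = 1 →
      ENNReal.ofReal q * volume (Metric.closedBall (0:EE k) 1) ≤ volume (capS u s)) :
    ∃ v : EE k, ‖v‖ = 1 ∧ ∃ S' ⊆ S, (S'.card : ℝ) ≤ (1-q) * S.card ∧
      ∀ u ∈ S, u ∉ S' → ‖u - v‖ ≤ s := by
  classical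
  rcases S.eq_empty_or_nonempty with rfl | hne
  · exact ⟨EuclideanSpace.single 0 1, by simp, ∅, by simp⟩
  have hB0 : volume (Metric.closedBall (0:EE k) 1) ≠ 0 :=
    (Metric.measure_closedBall_pos volume 0 one_pos).ne'
  have hBt : volume (Metric.closedBall (0:EE k) 1) ≠ ⊤ := measure_closedBall_lt_top.ne
  let F : EE k → Finset (EE k) := fun z => S.filter (fun u => z ∈ capS u s)
  have key : ∃ z : EE k, q * S.card ≤ ((F z).card : ℝ) := by
    by_contra! hcon
    have hint : ∫⁻ z in Metric.closedBall (0:EE k) 1, ((F z).card : ENNReal)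
        = ∑ u ∈ S, volume (capS u s) := by
      have : ∀ z, ((F z).card : ENNReal) = ∑ u ∈ S, (capS u s).indicator 1 z := by
        intro z
        simp only [F, Finset.card_filter, Set.indicator_apply]
        push_cast
        rfl
      simp_rw [this]
      rw [lintegral_finsetSum _ (fun u _ => measurable_one.indicator (capS_meas u s))]
      refine Finset.sum_congr rfl fun u _ => ?_
      rw [lintegral_indicator_one (capS_meas u s), Measure.restrict_apply (capS_meas u s)]
      congr 1
      apply Set.inter_eq_left.mpr
      intro z hz
      simpa using hz.2.1
    have h2 : (S.card : ENNReal) * (ENNReal.ofReal q * volume (Metric.closedBall (0:EE k) 1))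
        ≤ ∑ u ∈ S, volume (capS u s) := by
      rw [← nsmul_eq_mul]
      exact Finset.card_nsmul_le_sum _ _ _ (fun u hu => hvol u (hS u hu))
    have h3 : ∫⁻ z in Metric.closedBall (0:EE k) 1, ((F z).card : ENNReal)
        < ∫⁻ z in Metric.closedBall (0:EE k) 1, ENNReal.ofReal (q * S.card) := by
      apply lintegral_strict_mono
      · simpa using hB0
      · exact measurable_const.aemeasurable
      · rw [hint]
        refine ((Finset.sum_le_card_nsmul S _ _ (fun u _ => measure_mono (t := Metric.closedBall (0:EE k) 1) ?_)).trans_lt ?_).ne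
        · intro z hz
          simpa using hz.2.1
        · rw [nsmul_eq_mul]
          exact ENNReal.mul_lt_top (by simp) hBt.lt_top
      · refine Filter.Eventually.of_forall fun z => ?_
        rw [← ENNReal.ofReal_natCast, ENNReal.ofReal_lt_ofReal_iff_of_nonneg (by positivity)]
        exact hcon z
    rw [hint, setLIntegral_const] at h3
    refine absurd (h2.trans_lt h3) (not_lt.mpr (le_of_eq ?_))
    rw [ENNReal.ofReal_mul hq.le, ENNReal.ofReal_natCast]
    ring
  obtain ⟨z, hz⟩ := key
  have hcardS : 0 < (S.card : ℝ) := by exact_mod_cast hne.card_pos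
  have hFne : (F z).Nonempty := by
    rw [← Finset.card_pos]
    have : 0 < ((F z).card : ℝ) := lt_of_lt_of_le (by positivity) hz
    exact_mod_cast this
  obtain ⟨w, hw⟩ := hFne
  have hz0 : z ≠ 0 := (Finset.mem_filter.mp hw).2.1
  refine ⟨(‖z‖⁻¹:ℝ) • z, ?_, S \ F z, Finset.sdiff_subset, ?_, ?_⟩
  · rw [norm_smul, norm_inv, norm_norm, inv_mul_cancel₀ (norm_ne_zero_iff.mpr hz0)]
  · rw [Finset.cast_card_sdiff (Finset.filter_subset _ _)]
    linarith
  · intro u hu hu'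
    have : u ∈ F z := by
      by_contra h
      exact hu' (Finset.mem_sdiff.mpr ⟨hu, h⟩)
    exact capS_dist hs.le (hS u hu) (Finset.mem_filter.mp this).2

lemma greedy_iter {k:ℕ} (S : Finset (EE k)) (s q : ℝ) (hs : 0 < s) (hq : 0 < q) (hq1 : q ≤ 1)
    (hS : ∀ u ∈ S, ‖u‖ = 1)
    (hvol : ∀ u : EE k, ‖u‖ = 1 →
      ENNReal.ofReal q * volume (Metric.closedBall (0:EE k) 1) ≤ volume (capS u s)) (n : ℕ) :
    ∃ V : Finset (EE k), V.card ≤ n ∧ (∀ v ∈ V, ‖v‖ = 1) ∧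
      ∃ S' ⊆ S, (S'.card : ℝ) ≤ (1-q)^n * S.card ∧
      ∀ u ∈ S, u ∉ S' → ∃ v ∈ V, ‖u - v‖ ≤ s := by
  classical
  induction n with
  | zero => exact ⟨∅, by simp, by simp, S, subset_rfl, by simp, fun u hu hu' => absurd hu hu'⟩
  | succ n ih =>
    obtain ⟨V, hV, hV1, S', hS', hc, hcov⟩ := ih
    obtain ⟨v, hv, S'', hS'', hc', hcov'⟩ :=
      greedy_step S' s q hs hq (fun u hu => hS u (hS' hu)) hvol
    refine ⟨insert v V, (Finset.card_insert_le _ _).trans (by omega), ?_, S'', hS''.trans hS', ?_, ?_⟩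
    · intro w hw
      rcases Finset.mem_insert.mp hw with rfl | hw
      · exact hv
      · exact hV1 w hw
    · calc _ ≤ (1-q) * S'.card := hc'
        _ ≤ (1-q) * ((1-q)^n * S.card) := by
          apply mul_le_mul_of_nonneg_left hc; linarith
        _ = _ := by ring
    · intro u hu hu'
      by_cases h : u ∈ S'
      · exact ⟨v, Finset.mem_insert_self _ _, hcov' u h hu'⟩
      · obtain ⟨w, hw, hwu⟩ := hcov u hu h
        exact ⟨w, Finset.mem_insert_of_mem hw, hwu⟩

/-- Combination: a net at scale `2 t`, greedy covering of the net at scale `s`. -/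
lemma greedy_cover {k:ℕ} (s t q p A : ℝ) (hs : 0 < s) (ht : 0 < t) (hq : 0 < q) (hq1 : q ≤ 1)
    (hp : 0 < p) (hA : 0 ≤ A) (hqp : q = Real.exp A * p)
    (hvol : ∀ u : EE k, ‖u‖ = 1 →
      ENNReal.ofReal q * volume (Metric.closedBall (0:EE k) 1) ≤ volume (capS u s))
    (hvol' : ∀ u : EE k, ‖u‖ = 1 →
      ENNReal.ofReal p * volume (Metric.closedBall (0:EE k) 1) ≤ volume (capS u t)) :
    ∃ V : Finset (EE k), (∀ v ∈ V, ‖v‖ = 1) ∧ (∀ x : EE k, ‖x‖ = 1 → ∃ v ∈ V, ‖x - v‖ ≤ s + 2 * t) ∧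
      (V.card : ℝ) ≤ (A + 1) / q + 1 := by
  classical
  obtain ⟨S, hS1, hS2, hSc⟩ := sphere_net t p ht hp hvol'
  obtain ⟨V, hVc, hV1, S', hS', hS'c, hcov⟩ := greedy_iter S s q hs hq hq1 hS1 hvol ⌈A/q⌉₊
  refine ⟨V ∪ S', ?_, ?_, ?_⟩
  · intro v hv
    rcases Finset.mem_union.mp hv with h | h
    · exact hV1 v h
    · exact hS1 v (hS' h)
  · intro x hx
    obtain ⟨u, hu, hxu⟩ := hS2 x hx
    by_cases h : u ∈ S'
    · exact ⟨u, Finset.mem_union_right _ h, by linarith⟩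
    · obtain ⟨v, hv, huv⟩ := hcov u hu h
      refine ⟨v, Finset.mem_union_left _ hv, ?_⟩
      have := norm_sub_le_norm_sub_add_norm_sub x u v
      linarith
  · have h1 : ((V ∪ S').card : ℝ) ≤ V.card + S'.card := by exact_mod_cast Finset.card_union_le _ _
    have h2 : (V.card : ℝ) ≤ A/q + 1 := by
      calc (V.card : ℝ) ≤ (⌈A/q⌉₊ : ℝ) := by exact_mod_cast hVc
        _ ≤ _ := (Nat.ceil_lt_add_one (by positivity)).le
    have h3 : (1-q)^⌈A/q⌉₊ ≤ Real.exp (-A) := by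
      calc (1-q)^⌈A/q⌉₊ ≤ (Real.exp (-q))^⌈A/q⌉₊ := by
            apply pow_le_pow_left₀ (by linarith)
            have := Real.add_one_le_exp (-q); linarith
        _ = Real.exp (⌈A/q⌉₊ * (-q)) := by rw [Real.exp_nat_mul]
        _ ≤ _ := by
          apply Real.exp_le_exp.mpr
          have := Nat.le_ceil (A/q)
          rw [div_le_iff₀ hq] at this
          linarith
    have h4 : (S'.card : ℝ) ≤ 1/q := by
      rw [le_div_iff₀ hq]
      calc (S'.card : ℝ) * q ≤ ((1-q)^⌈A/q⌉₊ * S.card) * q := by gcongr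
        _ ≤ (Real.exp (-A) * S.card) * q := by gcongr
        _ = S.card * p := by
          rw [hqp, Real.exp_neg]; field_simp
        _ ≤ 1 := hSc
    rw [add_div]; linarith

/-- The constant in the cap volume bound. -/
def capC (k : ℕ) : ℝ := (1 - (k:ℝ)/(k+1)) * ((k:ℝ)/(k+1))^k / 2

lemma capC_vol {k:ℕ} (hk : 1 ≤ k) (s β : ℝ) (hs : 0 < s) (hs1 : s ≤ 1)
    (hβ : 0 < β) (hβs : β^2 ≤ s^2 * (1 - s^2/4)) (u : EE k) (hu : ‖u‖ = 1) :
    ENNReal.ofReal (capC k * β^k) * volume (Metric.closedBall (0:EE k) 1) ≤ volume (capS u s) := by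
  have hk' : (0:ℝ) < k := by exact_mod_cast hk
  have h0 : 0 < s^2 * (1 - s^2/4) := by
    have : 0 < 1 - s^2/4 := by nlinarith
    positivity
  have hl1 : (k:ℝ)/(k+1) < 1 := by rw [div_lt_one (by positivity)]; linarith
  refine le_trans ?_ (capS_vol u s (Real.sqrt (s^2 * (1 - s^2/4))) ((k:ℝ)/(k+1)) hs hs1 hu
    (Real.sqrt_pos.mpr h0) (Real.sq_sqrt h0.le) (by positivity) hl1)
  have hβ' : β ≤ Real.sqrt (s^2 * (1 - s^2/4)) := Real.le_sqrt_of_sq_le hβs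
  gcongr
  unfold capC
  have : (1 - (k:ℝ)/(k+1)) * ((k:ℝ)/(k+1))^k / 2 * β^k
      = (1 - (k:ℝ)/(k+1)) * ((k:ℝ)/(k+1) * β)^k / 2 := by rw [mul_pow]; ring
  rw [this]
  have h2 : 0 ≤ 1 - (k:ℝ)/(k+1) := by linarith
  gcongr

lemma capC_pos {k:ℕ} (hk : 1 ≤ k) : 0 < capC k := by
  have hk' : (0:ℝ) < k := by exact_mod_cast hk
  have hl1 : (k:ℝ)/(k+1) < 1 := by rw [div_lt_one (by positivity)]; linarith
  have : 0 < 1 - (k:ℝ)/(k+1) := by linarith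
  unfold capC; positivity

lemma capC_ge {k:ℕ} (hk : 1 ≤ k) : 1 ≤ capC k * (2 * (k+1) * Real.exp 1) := by
  have hk' : (0:ℝ) < k := by exact_mod_cast hk
  have h1 : (((k:ℝ)+1)/k)^k ≤ Real.exp 1 := by
    calc (((k:ℝ)+1)/k)^k ≤ (Real.exp (1/k))^k := by
          apply pow_le_pow_left₀ (by positivity)
          have := Real.add_one_le_exp (1/(k:ℝ))
          rw [add_div, div_self hk'.ne']; linarith
      _ = Real.exp 1 := by rw [← Real.exp_nat_mul]; congr 1; field_simp
  have h2 : capC k * (2 * (k+1) * Real.exp 1) = ((k:ℝ)/(k+1))^k * Real.exp 1 := by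
    unfold capC; field_simp; ring
  rw [h2]
  calc (1:ℝ) = ((k:ℝ)/(k+1))^k * (((k:ℝ)+1)/k)^k := by
        rw [← mul_pow, div_mul_div_cancel₀ (by positivity), div_self hk'.ne', one_pow]
    _ ≤ _ := by gcongr

lemma capC_le (k:ℕ) : capC k * (2 * (k+1)) ≤ 1 := by
  have h2 : capC k * (2 * (k+1)) = ((k:ℝ)/(k+1))^k := by
    unfold capC; field_simp; ring
  rw [h2]
  apply pow_le_one₀ (by positivity)
  rw [div_le_one (by positivity)]; linarith

/-- The numerical bound. -/
def bigB (k : ℕ) : ℝ := 5 * (k : ℝ) * Real.log ((k : ℝ) + 1) * Real.sqrt (2 * Real.pi * ((k : ℝ) + 1))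

lemma sqrt_two_lb : (1.414:ℝ) ≤ Real.sqrt 2 := Real.le_sqrt_of_sq_le (by norm_num)

lemma log_lb (x : ℝ) (a b : ℕ) (hx : 0 < x) (ha : 0 < a) (h : (2:ℝ)^b ≤ x^a) : (b/a:ℝ) * 0.6931 ≤ Real.log x := by
  have h1 := Real.log_le_log (by positivity) h
  rw [Real.log_pow, Real.log_pow] at h1
  have h2 := Real.log_two_gt_d9
  have ha' : (0:ℝ) < a := by exact_mod_cast ha
  rw [div_mul_eq_mul_div, div_le_iff₀ ha']
  have : (b:ℝ) * 0.6931 ≤ b * Real.log 2 := by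
    apply mul_le_mul_of_nonneg_left _ (by positivity)
    linarith
  linarith

lemma small_num (k : ℕ) (hk : 1 ≤ k) (hk6 : k ≤ 6) :
    1 ≤ capC k * (0.484 * Real.sqrt 2)^k * bigB k := by
  have hpi := Real.pi_gt_d4
  have h2 : (0.6843:ℝ) ≤ 0.484 * Real.sqrt 2 := by linarith [sqrt_two_lb]
  have gen : ∀ (L W : ℝ), 0 ≤ L → 0 ≤ W → L ≤ Real.log ((k:ℝ)+1) → W^2 ≤ 2 * 3.1415 * ((k:ℝ)+1) →
      1 ≤ capC k * 0.6843^k * (5 * k * L * W) → 1 ≤ capC k * (0.484 * Real.sqrt 2)^k * bigB k := by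
    intro L W hL hW h3 h4 h5
    refine h5.trans ?_
    have h6 : W ≤ Real.sqrt (2 * Real.pi * ((k : ℝ) + 1)) := by
      apply Real.le_sqrt_of_sq_le
      refine h4.trans ?_
      gcongr
    have h7 := (capC_pos hk).le
    unfold bigB
    have h8 : 0 ≤ Real.log ((k:ℝ)+1) := hL.trans h3
    gcongr
  interval_cases k
  · refine gen ((1/1:ℝ)*0.6931) 3.54 (by norm_num) (by norm_num) ?_ (by norm_num) (by norm_num [capC])
    exact_mod_cast log_lb _ 1 1 (by norm_num) (by norm_num) (by norm_num)
  · refine gen ((3/2:ℝ)*0.6931) 4.3 (by norm_num) (by norm_num) ?_ (by norm_num) (by norm_num [capC])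
    exact_mod_cast log_lb _ 2 3 (by norm_num) (by norm_num) (by norm_num)
  · refine gen ((2/1:ℝ)*0.6931) 5 (by norm_num) (by norm_num) ?_ (by norm_num) (by norm_num [capC])
    exact_mod_cast log_lb _ 1 2 (by norm_num) (by norm_num) (by norm_num)
  · refine gen ((2/1:ℝ)*0.6931) 5.6 (by norm_num) (by norm_num) ?_ (by norm_num) (by norm_num [capC])
    exact_mod_cast log_lb _ 1 2 (by norm_num) (by norm_num) (by norm_num)
  · refine gen ((5/2:ℝ)*0.6931) 6.1 (by norm_num) (by norm_num) ?_ (by norm_num) (by norm_num [capC])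
    exact_mod_cast log_lb _ 2 5 (by norm_num) (by norm_num) (by norm_num)
  · refine gen ((11/4:ℝ)*0.6931) 6.6 (by norm_num) (by norm_num) ?_ (by norm_num) (by norm_num [capC])
    exact_mod_cast log_lb _ 4 11 (by norm_num) (by norm_num) (by norm_num)

lemma log18 : Real.log 18 ≤ 2.9 := by
  have h1 : Real.log ((18:ℝ)^11) ≤ Real.log ((2:ℝ)^46) := Real.log_le_log (by positivity) (by norm_num)
  rw [Real.log_pow, Real.log_pow] at h1
  have := Real.log_two_lt_d9
  push_cast at h1
  linarith

lemma growth (k : ℕ) (hk : 7 ≤ k) : 2.89 * ((k:ℝ)+1) ≤ 6.28 * 1.215^k := by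
  induction k, hk using Nat.le_induction with
  | base => norm_num
  | succ n hn ih =>
    have : (7:ℝ) ≤ n := by exact_mod_cast hn
    rw [pow_succ]; push_cast
    linarith

lemma big_num (k : ℕ) (hk : 7 ≤ k) :
    k * Real.log 18 + 1.1 ≤ capC k * (Real.sqrt 3 / 2 * 0.9 * Real.sqrt 2)^k * bigB k := by
  have hk7 : (7:ℝ) ≤ k := by exact_mod_cast hk
  set G := Real.sqrt 3 / 2 * 0.9 * Real.sqrt 2 with hG
  have hG0 : 0 ≤ G := by positivity
  have hG2 : G^2 = 1.215 := by
    rw [hG]; simp only [mul_pow, div_pow]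
    rw [Real.sq_sqrt (by norm_num), Real.sq_sqrt (by norm_num)]; norm_num
  set W := Real.sqrt (2 * Real.pi * ((k : ℝ) + 1)) with hW
  have hpi := Real.pi_gt_d2
  have hWG : 1.7 * ((k:ℝ)+1) ≤ W * G^k := by
    apply (abs_le_of_sq_le_sq' _ (by positivity)).2
    rw [mul_pow W, ← pow_mul, mul_comm k 2, pow_mul, hG2, hW, Real.sq_sqrt (by positivity)]
    have h1 := growth k hk
    calc (1.7 * ((k:ℝ)+1))^2 = (2.89 * ((k:ℝ)+1)) * (k+1) := by ring
      _ ≤ (6.28 * 1.215^k) * (k+1) := by gcongr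
      _ ≤ (2 * Real.pi * 1.215^k) * (k+1) := by gcongr; linarith
      _ = _ := by ring
  have hlog : 2.0793 ≤ Real.log ((k:ℝ)+1) := by
    have h1 : Real.log 8 ≤ Real.log ((k:ℝ)+1) := Real.log_le_log (by norm_num) (by linarith)
    have h2 := log_lb 8 1 3 (by norm_num) (by norm_num) (by norm_num)
    norm_num at h2 h1 ⊢
    linarith
  have hC := capC_ge (show 1 ≤ k by omega)
  have hC0 := capC_pos (show 1 ≤ k by omega)
  have he := Real.exp_one_lt_d9
  have h1 : (1:ℝ) ≤ capC k * (k+1) * 5.4366 := by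
    refine hC.trans ?_
    calc capC k * (2 * (k+1) * Real.exp 1) = capC k * (k+1) * (2 * Real.exp 1) := by ring
      _ ≤ _ := by gcongr; linarith
  have h2 : capC k * G^k * bigB k = capC k * (5 * k * Real.log (k+1)) * (W * G^k) := by
    unfold bigB; ring
  rw [h2]
  calc k * Real.log 18 + 1.1 ≤ k * 2.9 + 1.1 := by gcongr; exact log18
    _ ≤ 5 * k * 2.0793 * 1.7 / 5.4366 := by
      rw [le_div_iff₀ (by norm_num)]; linarith
    _ ≤ 5 * k * 2.0793 * 1.7 / 5.4366 * (capC k * (k+1) * 5.4366) := le_mul_of_one_le_right (by positivity) h1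
    _ = capC k * (5 * k * 2.0793) * (1.7 * (k+1)) := by ring
    _ ≤ _ := by gcongr

lemma unit_cover {k:ℕ} (hk : 1 ≤ k) (ρ : ℝ) (hρ : 0 < ρ) (hρ1 : ρ ≤ 1) :
    ∃ V : Finset (EE k), (∀ v ∈ V, ‖v‖ = 1) ∧ (∀ x : EE k, ‖x‖ = 1 → ∃ v ∈ V, ‖x - v‖ ≤ ρ) ∧
      (V.card : ℝ) ≤ bigB k * (Real.sqrt 2 / ρ)^k := by
  have hC0 := capC_pos hk
  have hρ2 : ρ^2 ≤ 1 := by nlinarith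
  rcases le_or_gt k 6 with h6 | h7
  · have hq : 0 < capC k * (0.484*ρ)^k := by positivity
    obtain ⟨S, h1, h2, h3⟩ := sphere_net (k := k) (ρ/2) (capC k * (0.484*ρ)^k) (by positivity) hq
      (capC_vol hk (ρ/2) (0.484*ρ) (by positivity) (by linarith) (by positivity) (by
        nlinarith [mul_nonneg (sq_nonneg ρ) (sub_nonneg.mpr hρ2)]))
    refine ⟨S, h1, ?_, ?_⟩
    · intro x hx
      obtain ⟨u, hu, h⟩ := h2 x hx
      exact ⟨u, hu, by linarith⟩
    · rw [← le_div_iff₀ hq] at h3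
      refine h3.trans ?_
      rw [div_le_iff₀ hq]
      refine (small_num k hk h6).trans (le_of_eq ?_)
      have : (0.484 * Real.sqrt 2)^k = (Real.sqrt 2 / ρ)^k * (0.484*ρ)^k := by
        rw [← mul_pow]; congr 1; field_simp
      rw [this]; ring
  · have h3 : Real.sqrt 3 ^ 2 = 3 := Real.sq_sqrt (by norm_num)
    set q := capC k * (Real.sqrt 3 / 2 * (0.9*ρ))^k with hqd
    set p := capC k * (Real.sqrt 3 / 2 * (0.05*ρ))^k with hpd
    have hq : 0 < q := by positivity
    have hp : 0 < p := by positivity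
    have hk7 : (7:ℝ) ≤ k := by exact_mod_cast h7
    have hq1 : q ≤ 0.1 := by
      have h4 : (Real.sqrt 3 / 2 * (0.9*ρ))^k ≤ 1 := by
        apply pow_le_one₀ (by positivity)
        have : Real.sqrt 3 ≤ 2 := Real.sqrt_le_iff.mpr ⟨by norm_num, by norm_num⟩
        nlinarith [Real.sqrt_nonneg 3]
      have h5 := capC_le k
      have h6 : q ≤ capC k := mul_le_of_le_one_right hC0.le h4
      nlinarith
    have hgen : ∀ s : ℝ, s ≤ 1 → 0 < s → (Real.sqrt 3 / 2 * s)^2 ≤ s^2 * (1 - s^2/4) := by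
      intro s hs hs0
      rw [mul_pow, div_pow, h3]
      have : s^2 ≤ 1 := by nlinarith
      nlinarith [mul_nonneg (sq_nonneg s) (sub_nonneg.mpr this)]
    obtain ⟨V, h1, h2, h4⟩ := greedy_cover (k := k) (0.9*ρ) (0.05*ρ) q p (k * Real.log 18)
      (by positivity) (by positivity) hq (by linarith) hp (by positivity)
      (by
        rw [Real.exp_nat_mul, Real.exp_log (by norm_num), hqd, hpd, mul_left_comm (18 ^ k) (capC k), ← mul_pow]
        congr 2; ring)
      (capC_vol hk _ _ (by positivity) (by linarith) (by positivity) (hgen _ (by linarith) (by positivity)))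
      (capC_vol hk _ _ (by positivity) (by linarith) (by positivity) (hgen _ (by linarith) (by positivity)))
    refine ⟨V, h1, ?_, ?_⟩
    · intro x hx
      obtain ⟨u, hu, h⟩ := h2 x hx
      exact ⟨u, hu, by linarith⟩
    · refine h4.trans ?_
      have h5 : (k * Real.log 18 + 1) / q + 1 ≤ (k * Real.log 18 + 1.1) / q := by
        rw [div_add_one hq.ne']; exact div_le_div_of_nonneg_right (by linarith) hq.le
      refine h5.trans ?_
      rw [div_le_iff₀ hq]
      refine (big_num k h7).trans (le_of_eq ?_)
      have : (Real.sqrt 3 / 2 * 0.9 * Real.sqrt 2)^k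
          = (Real.sqrt 2 / ρ)^k * (Real.sqrt 3 / 2 * (0.9*ρ))^k := by
        rw [← mul_pow]; congr 1; field_simp
      rw [this, hqd]; ring

end Helpers

lemma lpNorm_two_eq {d : ℕ} (x : Fin d → ℝ) : lpNorm 2 x = ‖(WithLp.toLp 2 x : EuclideanSpace ℝ (Fin d))‖ := by
  rw [EuclideanSpace.norm_eq, lpNorm, if_neg (by simp), Real.sqrt_eq_rpow]
  simp

/-- **Covering the sphere `∂B₂^{k+1}(0, R)` by `m` balls of radius `r`**. -/
theorem sphere_covering
    (k m : ℕ) (r R : ℝ) (hr : 0 < r) (hrR : r ≤ R)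
    (hm : (Real.sqrt 2 *
        (5 * (k : ℝ) * Real.log ((k : ℝ) + 1) * Real.sqrt (2 * Real.pi * ((k : ℝ) + 1)))
          ^ ((1 : ℝ) / (k : ℝ)) * R / r) ^ k < (m : ℝ)) :
    ∃ v : Fin m → (Fin (k + 1) → ℝ),
      (∀ i, lpNorm 2 (v i) = R) ∧
      ∀ x : Fin (k + 1) → ℝ, lpNorm 2 x = R → ∃ i, lpNorm 2 (x - v i) ≤ r := by
  simp only [lpNorm_two_eq]
  have hR : 0 < R := hr.trans_le hrR
  -- it suffices to find a finite covering set on the unit sphere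
  suffices H : ∃ V : Finset (EE k), (∀ v ∈ V, ‖v‖ = 1) ∧
      (∀ x : EE k, ‖x‖ = 1 → ∃ v ∈ V, ‖x - v‖ ≤ r / R) ∧ V.card ≤ m by
    obtain ⟨V, hV1, hV2, hVm⟩ := H
    obtain ⟨v0, hv0, -⟩ := hV2 (EuclideanSpace.single 0 1) (by simp)
    let w : Fin m → EE k := fun i =>
      if h : (i:ℕ) < V.card then (V.equivFin.symm ⟨i, h⟩ : EE k) else v0
    have hw : ∀ i, ‖w i‖ = 1 := by
      intro i
      simp only [w]
      split_ifs with h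
      · exact hV1 _ (V.equivFin.symm ⟨i, h⟩).2
      · exact hV1 _ hv0
    have hw2 : ∀ v ∈ V, ∃ i, w i = v := by
      intro v hv
      refine ⟨⟨V.equivFin ⟨v, hv⟩, (V.equivFin ⟨v, hv⟩).2.trans_le hVm⟩, ?_⟩
      simp [w]
    refine ⟨fun i => WithLp.ofLp (R • w i), ?_, ?_⟩
    · intro i
      rw [WithLp.toLp_ofLp, norm_smul, hw i, Real.norm_of_nonneg hR.le, mul_one]
    · intro x hx
      set y : EE k := WithLp.toLp 2 x with hy
      obtain ⟨v, hv, hyv⟩ := hV2 (R⁻¹ • y) (by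
        rw [norm_smul, hx, norm_inv, Real.norm_of_nonneg hR.le, inv_mul_cancel₀ hR.ne'])
      obtain ⟨i, rfl⟩ := hw2 v hv
      refine ⟨i, ?_⟩
      have e : (WithLp.toLp 2 (x - WithLp.ofLp (R • w i)) : EE k) = R • (R⁻¹ • y - w i) := by
        rw [WithLp.toLp_sub, WithLp.toLp_ofLp, smul_sub, smul_smul, mul_inv_cancel₀ hR.ne', one_smul]
      rw [e, norm_smul, Real.norm_of_nonneg hR.le]
      calc R * ‖R⁻¹ • y - w i‖ ≤ R * (r / R) := by gcongr
        _ = r := by field_simp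
  rcases Nat.eq_zero_or_pos k with rfl | hk
  · -- the zero-dimensional sphere has two points
    classical
    have hm2 : 2 ≤ m := by
      have : (1:ℝ) < m := by simpa using hm
      exact_mod_cast this
    refine ⟨{EuclideanSpace.single 0 1, EuclideanSpace.single 0 (-1)}, by simp, ?_,
      Finset.card_le_two.trans hm2⟩
    intro x hx
    have hx0 : x 0 = 1 ∨ x 0 = -1 := by
      rw [EuclideanSpace.norm_eq] at hx
      simpa using hx
    have hpos : 0 ≤ r / R := by positivity
    rcases hx0 with h | h
    · refine ⟨EuclideanSpace.single 0 1, by simp, ?_⟩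
      have : x = EuclideanSpace.single 0 1 := by
        ext i; fin_cases i; simpa using h
      rw [this, sub_self, norm_zero]; exact hpos
    · refine ⟨EuclideanSpace.single 0 (-1), by simp, ?_⟩
      have : x = EuclideanSpace.single 0 (-1) := by
        ext i; fin_cases i; simpa using h
      rw [this, sub_self, norm_zero]; exact hpos
  · obtain ⟨V, h1, h2, h3⟩ := unit_cover hk (r/R) (by positivity) ((div_le_one hR).mpr hrR)
    refine ⟨V, h1, h2, ?_⟩
    have hk0 : (0:ℝ) < k := by exact_mod_cast hk
    have hB : 0 ≤ bigB k := by
      have : 0 ≤ Real.log ((k:ℝ)+1) := Real.log_nonneg (by linarith)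
      unfold bigB; positivity
    have e : (Real.sqrt 2 * (bigB k) ^ ((1 : ℝ) / (k : ℝ)) * R / r) ^ k
        = bigB k * (Real.sqrt 2 / (r/R))^k := by
      have h4 : ((bigB k) ^ ((1 : ℝ) / (k : ℝ)))^k = bigB k := by
        rw [← Real.rpow_natCast, ← Real.rpow_mul hB, one_div, inv_mul_cancel₀ hk0.ne', Real.rpow_one]
      have h5 : Real.sqrt 2 * (bigB k) ^ ((1 : ℝ) / (k : ℝ)) * R / r
          = (bigB k) ^ ((1 : ℝ) / (k : ℝ)) * (Real.sqrt 2 / (r/R)) := by field_simp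
      rw [h5, mul_pow, h4]
    have h6 : (V.card : ℝ) < m := by
      refine h3.trans_lt ?_
      rw [← e]
      exact hm
    exact_mod_cast h6.le

end
end
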